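/- arXiv:2209.09312 — 4 statements merged into one kernel-verified Lean document; each statement's English description precedes it below -/
import Mathlib

section
/- For every integer n ≥ 6 and every divisor k of n with 1 < k < n, we have k! · ((n/k)!)^k < (n−1)!. -/
/-!
Write `n = k * m` with `k, m ≥ 2`, and induct on `k` for fixed `m`. Passing from `k` to `k + 1`
multiplies the left side by `(k + 1) * m!` and the right side by
`(k * m) * ((k * m + 1) ⋯ (k * m + m - 1))`, which is at least as large since `k + 1 ≤ k * m` and
the remaining `m - 1` factors dominate `2, …, m`. The induction starts at `k = 2` when `m ≥ 3`
(`two_mul_factorial_sq_lt`, by induction on `m`), and at `k = 3` when `m = 2`.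
-/

open Nat in
theorem factorial_mul_factorial_succ_le (a j : ℕ) (ha : 1 ≤ a) : a ! * (j + 1)! ≤ (a + j)! := by
  induction j with
  | zero => simp
  | succ j ih =>
    rw [Nat.factorial_succ (j + 1), ← Nat.add_assoc, Nat.factorial_succ (a + j)]
    calc a ! * ((j + 1 + 1) * (j + 1)!) = (j + 1 + 1) * (a ! * (j + 1)!) := by ring
      _ ≤ (a + j + 1) * (a + j)! := Nat.mul_le_mul (by omega) ih

open Nat in
theorem two_mul_factorial_sq_lt (m : ℕ) (hm : 3 ≤ m) : 2 ! * m ! ^ 2 < (2 * m - 1)! := by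
  induction m, hm using Nat.le_induction with
  | base => decide
  | succ m hm ih =>
    have h : 2 * (m + 1) - 1 = (2 * m - 1) + 1 + 1 := by omega
    rw [h, Nat.factorial_succ (2 * m - 1 + 1), Nat.factorial_succ (2 * m - 1), Nat.factorial_succ m]
    have h1 : 2 * m - 1 + 1 = 2 * m := by omega
    rw [h1]
    calc 2 ! * ((m + 1) * m !) ^ 2 = (m + 1) * (m + 1) * (2 ! * m ! ^ 2) := by ring
      _ < (m + 1) * (m + 1) * (2 * m - 1)! := Nat.mul_lt_mul_of_pos_left ih (by positivity)
      _ ≤ (2 * m + 1) * (2 * m) * (2 * m - 1)! :=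
        Nat.mul_le_mul_right _ (Nat.mul_le_mul (by omega) (by omega))
      _ = _ := by ring

open Nat in
theorem factorial_mul_pow_lt_step (k m : ℕ) (hk : 1 ≤ k) (hm : 2 ≤ m)
    (ih : k ! * m ! ^ k < (k * m - 1)!) : (k + 1)! * m ! ^ (k + 1) < ((k + 1) * m - 1)! := by
  have hkm : k + 1 ≤ k * m := by nlinarith
  have h := factorial_mul_factorial_succ_le (k * m) (m - 1) (by omega)
  have e1 : m - 1 + 1 = m := by omega
  have e2 : (k + 1) * m - 1 = k * m + (m - 1) := by rw [Nat.add_mul]; omega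
  have e3 : (k * m)! = k * m * (k * m - 1)! := (Nat.mul_factorial_pred (by omega)).symm
  rw [e1] at h
  rw [e2]
  calc (k + 1)! * m ! ^ (k + 1) = (k + 1) * m ! * (k ! * m ! ^ k) := by
        rw [Nat.factorial_succ]; ring
    _ < (k + 1) * m ! * (k * m - 1)! := Nat.mul_lt_mul_of_pos_left ih (by positivity)
    _ ≤ k * m * m ! * (k * m - 1)! :=
      Nat.mul_le_mul_right _ (Nat.mul_le_mul_right _ hkm)
    _ = (k * m)! * m ! := by rw [e3]; ring
    _ ≤ _ := h

/-- For `n ≥ 6` and a nontrivial divisor `k` of `n`,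
`k! · ((n/k)!)^k < (n−1)!`. -/
theorem stmt3 (n k : ℕ) (hn : 6 ≤ n) (hdvd : k ∣ n) (hk1 : 1 < k) (hk2 : k < n) :
    Nat.factorial k * (Nat.factorial (n / k)) ^ k < Nat.factorial (n - 1) := by
  obtain ⟨m, rfl⟩ := hdvd
  rw [Nat.mul_div_cancel_left m (by omega)]
  have hm : 2 ≤ m := by
    by_contra h
    have : m ≤ 1 := by omega
    nlinarith
  rcases Nat.eq_or_lt_of_le hm with rfl | hm3
  · have hk3 : 3 ≤ k := by omega
    clear hn hk1 hk2
    induction k, hk3 using Nat.le_induction with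
    | base => decide
    | succ k hk ih => exact factorial_mul_pow_lt_step k 2 (by omega) le_rfl ih
  · have hk : 2 ≤ k := hk1
    clear hn hk1 hk2
    induction k, hk using Nat.le_induction with
    | base => exact two_mul_factorial_sq_lt m hm3
    | succ k hk ih => exact factorial_mul_pow_lt_step k m (by omega) hm ih
end

section
/- Let P be a finite ordered set of width w ≥ 3 such that no element of P is fixed by every automorphism of P, such that there is a j with |R_j| = w−1 and α(R_j) = (w−1)!, and such that the set {x ∈ P : rank(x) ≥ j+1} is nonempty and is not order-autonomous in P. Then the subposet R_j ∪ R_{j+1} is order-isomorphic to S_{w−1} or to (w−1)C_2, and consequently α(R_{j+1}) = (w−1)!. -/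
/-!
Write `n = w - 1`. Ranks are preserved by automorphisms, so `α(R_j) = n!` says that every
permutation of `R_j` is induced by an automorphism (`alphaRank_eq_factorial_iff`).

The elements of rank `< j` that lie below no element of `R_j` form a chain, as two incomparable
ones together with `R_j` would be an antichain of size `w + 1`. The least element of
this invariant chain would be a common fixed point, so there is no such element
(`exists_le_of_mem_lowSet`). Hence, if all of `R_j` were below all of `R_{j+1}`, the elements of
rank `≥ j + 1` would form an order-autonomous set. So some `u ∈ R_{j+1}` has a set of lower
neighbours in `R_j` of size `0 < k < n`. By symmetry every `k`-subset of `R_j` is the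
neighbourhood of an element of `R_{j+1}`, whence `n.choose k ≤ |R_{j+1}| ≤ n + 1`, which leaves only
`k = 1` and `k = n - 1` (`add_two_le_choose`).

In either case `R_j` injects into `R_{j+1}`, matching `r` to an element related to `r` alone (the
relation being `<` if `k = 1`, and its negation if `k = n - 1`). At most one element of
`R_{j+1}` is left over; it would either be a common fixed point or contradict the symmetry between
elements of `R_j`. So the matching is an equivariant bijection (`exists_matching`), from which
both the isomorphism type and `α(R_{j+1})` are read off.
-/

/-- `lowSet α k` is the set of elements of rank `< k`:
`lowSet α 0 = ∅` and `lowSet α (k+1)` adds the minimal elements of the complement. -/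
def lowSet (α : Type*) [PartialOrder α] : ℕ → Set α
  | 0 => ∅
  | k + 1 => lowSet α k ∪ {x | x ∉ lowSet α k ∧ ∀ y, y < x → y ∈ lowSet α k}

/-- `rankSet α k` is the set `R_k` of elements of rank `k`: the minimal elements
of the complement of the set of elements of rank `< k`. -/
def rankSet (α : Type*) [PartialOrder α] (k : ℕ) : Set α :=
  {x | x ∉ lowSet α k ∧ ∀ y, y < x → y ∈ lowSet α k}

/-- `α(R_k)`: the number of distinct restrictions of automorphisms to `R_k`. -/
noncomputable def alphaRank (α : Type*) [PartialOrder α] (k : ℕ) : ℕ :=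
  Set.ncard {g : ↥(rankSet α k) → α | ∃ Φ : α ≃o α, ∀ x : ↥(rankSet α k), g x = Φ x.1}

/-- The ordered set has width `w`: there is an antichain with `w` elements and
every antichain has at most `w` elements. -/
def HasWidthP (α : Type*) [PartialOrder α] (w : ℕ) : Prop :=
  (∃ s : Set α, IsAntichain (· ≤ ·) s ∧ s.ncard = w) ∧
    ∀ s : Set α, IsAntichain (· ≤ ·) s → s.ncard ≤ w

/-- Coconnected: no partition `P = B ∪ T` with nonempty `B`, `T` and `B < T`. -/
def CoconnectedP (α : Type*) [PartialOrder α] : Prop :=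
  ¬ ∃ B T : Set α, B.Nonempty ∧ T.Nonempty ∧ Disjoint B T ∧ B ∪ T = Set.univ ∧
    ∀ b ∈ B, ∀ t ∈ T, b < t

/-- No element is fixed by all automorphisms. -/
def NoCommonFixedPoint (α : Type*) [PartialOrder α] : Prop :=
  ¬ ∃ p : α, ∀ Φ : α ≃o α, Φ p = p

/-- Max-locked (the basic width `≥ 3` definition). -/
def MaxLockedBase (α : Type*) [PartialOrder α] : Prop :=
  CoconnectedP α ∧ NoCommonFixedPoint α ∧
    ((∃ w, HasWidthP α w ∧ 3 ≤ w ∧ w ≠ 4 ∧ ∃ k, Nat.factorial (w - 1) ≤ alphaRank α k) ∨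
      (HasWidthP α 4 ∧ ∃ k, 8 < alphaRank α k))

/-- Max-locked, including the width-2 convention. -/
def MaxLockedFull (α : Type*) [PartialOrder α] : Prop :=
  MaxLockedBase α ∨ (CoconnectedP α ∧ HasWidthP α 2 ∧ Nat.card (α ≃o α) = 2)

/-- Order-autonomous set. -/
def OrdAutonomous (α : Type*) [PartialOrder α] (S : Set α) : Prop :=
  S.Nonempty ∧ ∀ z ∉ S,
    ((∃ a ∈ S, z < a) → ∀ a ∈ S, z < a) ∧ ((∃ a ∈ S, a < z) → ∀ a ∈ S, a < z)

/-- `β` is order-isomorphic to the standard example `S_k`. -/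
def IsoSW (β : Type*) [PartialOrder β] (k : ℕ) : Prop :=
  ∃ e : β ≃ Fin k × Bool, ∀ x y : β,
    x ≤ y ↔ (e x = e y ∨ ((e x).2 = false ∧ (e y).2 = true ∧ (e x).1 ≠ (e y).1))

/-- `β` is order-isomorphic to `kC_2`, a disjoint union of `k` two-element chains. -/
def IsoKC2 (β : Type*) [PartialOrder β] (k : ℕ) : Prop :=
  ∃ e : β ≃ Fin k × Bool, ∀ x y : β,
    x ≤ y ↔ ((e x).1 = (e y).1 ∧ (e x).2 ≤ (e y).2)

/-- `β` is order-isomorphic to the 8-crown. -/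
def IsoC8 (β : Type*) [PartialOrder β] : Prop :=
  ∃ e : β ≃ Fin 4 × Bool, ∀ x y : β,
    x ≤ y ↔ (e x = e y ∨ ((e x).2 = false ∧ (e y).2 = true ∧
      ((e y).1 = (e x).1 ∨ (e y).1 = (e x).1 + 1)))

/-- Membership in `Aut_𝒟(P)`: every orbit of the cyclic group generated by `Φ`
is contained in some member of the partition `parts`. -/
def memAutD (α : Type*) [PartialOrder α] (parts : Set (Set α)) (Φ : α ≃o α) : Prop :=
  ∀ x : α, ∃ s ∈ parts, ∀ n : ℕ, (⇑Φ)^[n] x ∈ s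

/-- The `𝒟`-orbit of a point. -/
def dOrbit (α : Type*) [PartialOrder α] (parts : Set (Set α)) (x : α) : Set α :=
  {y | ∃ Φ : α ≃o α, memAutD α parts Φ ∧ Φ x = y}

/-- The set of `𝒟`-orbits. -/
def dOrbits (α : Type*) [PartialOrder α] (parts : Set (Set α)) : Set (Set α) :=
  Set.range (dOrbit α parts)

/-- Direct interdependence of two sets: a comparable pair of distinct points and an
incomparable pair. -/
def DirInterdep (α : Type*) [PartialOrder α] (C D : Set α) : Prop :=
  (∃ c ∈ C, ∃ d ∈ D, c ≠ d ∧ (c ≤ d ∨ d ≤ c)) ∧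
    ∃ c ∈ C, ∃ d ∈ D, ¬ c ≤ d ∧ ¬ d ≤ c

/-- `U` is an interdependent `𝒟`-orbit union: the union of the vertices of a connected
component of the orbit graph. -/
def IsIOU (α : Type*) [PartialOrder α] (parts : Set (Set α)) (U : Set α) : Prop :=
  ∃ O ∈ dOrbits α parts, U = ⋃₀ {E | E ∈ dOrbits α parts ∧
    Relation.ReflTransGen
      (fun C D => C ∈ dOrbits α parts ∧ D ∈ dOrbits α parts ∧ DirInterdep α C D) O E}

/-- The `Aut(P)`-orbit of a point. -/
def autOrbit (α : Type*) [PartialOrder α] (x : α) : Set α := {y | ∃ Φ : α ≃o α, Φ x = y}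

/-- The natural orbit structure: the set of `Aut(P)`-orbits. -/
def natOrbits (α : Type*) [PartialOrder α] : Set (Set α) := Set.range (autOrbit α)

/-- `U` is an interdependent orbit union w.r.t. the natural orbit structure. -/
def IsNatIOU (α : Type*) [PartialOrder α] (U : Set α) : Prop :=
  ∃ O ∈ natOrbits α, U = ⋃₀ {E | E ∈ natOrbits α ∧
    Relation.ReflTransGen
      (fun C D => C ∈ natOrbits α ∧ D ∈ natOrbits α ∧ DirInterdep α C D) O E}

/-- Membership in `Aut_{𝒩|U}(U)`: every orbit of the cyclic group generated by `Ψ`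
is contained in some `Aut(P)`-orbit that lies inside `U`. -/
def memAutNatU (α : Type*) [PartialOrder α] (U : Set α) (Ψ : ↥U ≃o ↥U) : Prop :=
  ∀ p : ↥U, ∃ s ∈ natOrbits α, s ⊆ U ∧ ∀ n : ℕ, ((⇑Ψ)^[n] p : α) ∈ s

/-- Without slack: no member of the partition contains a nontrivial order-autonomous
antichain. -/
def WithoutSlackP (α : Type*) [PartialOrder α] (parts : Set (Set α)) : Prop :=
  ∀ s ∈ parts, ¬ ∃ A : Set α, A ⊆ s ∧ OrdAutonomous α A ∧ IsAntichain (· ≤ ·) A ∧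
    A.ncard ≠ 1 ∧ A.ncard ≠ Nat.card α

/-- Tight: without slack, and every member of the partition is a `𝒟`-orbit. -/
def TightP (α : Type*) [PartialOrder α] (parts : Set (Set α)) : Prop :=
  WithoutSlackP α parts ∧ ∀ s ∈ parts, s ∈ dOrbits α parts

/-- `w`-adequately bounded. -/
def AdequatelyBounded (α : Type*) [PartialOrder α] (parts : Set (Set α)) (w : ℕ) : Prop :=
  ∃ (M : ℕ) (ws : Fin M → ℕ), (∀ j, ws j ≤ w - 1) ∧
    Set.ncard {Φ : α ≃o α | memAutD α parts Φ} ≤ ∏ j, Nat.factorial (ws j) ∧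
    ∑ j, ws j ≤ (Nat.card α - Set.ncard parts) / 2

/-- Connectedness of the comparability graph. -/
def PosetConnectedP (α : Type*) [PartialOrder α] : Prop :=
  ∀ x y : α, Relation.ReflTransGen (fun a b : α => a ≤ b ∨ b ≤ a) x y

section RankLayers

variable {α : Type*} [PartialOrder α]

/-! ### Ranks and automorphisms -/

theorem lowSet_apply_iff (Φ : α ≃o α) (k : ℕ) (x : α) :
    Φ x ∈ lowSet α k ↔ x ∈ lowSet α k := by
  induction k generalizing x with
  | zero => simp [lowSet]
  | succ k ih =>
    have key : (∀ y, y < Φ x → y ∈ lowSet α k) ↔ ∀ y, y < x → y ∈ lowSet α k := by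
      constructor
      · intro h y hy
        exact (ih y).1 (h _ (Φ.lt_iff_lt.2 hy))
      · intro h y hy
        have := h (Φ.symm y) (by rw [← Φ.lt_iff_lt]; simpa using hy)
        rw [← ih] at this
        simpa using this
    simp only [lowSet, Set.mem_union, Set.mem_ofPred_eq, ih, key]

theorem rankSet_apply_iff (Φ : α ≃o α) (k : ℕ) (x : α) :
    Φ x ∈ rankSet α k ↔ x ∈ rankSet α k := by
  have h1 : ∀ z : α, z ∈ rankSet α k ↔ z ∉ lowSet α k ∧ z ∈ lowSet α (k + 1) := by
    intro z
    simp only [rankSet, lowSet, Set.mem_union, Set.mem_ofPred_eq]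
    tauto
  rw [h1, h1, lowSet_apply_iff, lowSet_apply_iff]

theorem lowSet_lower (k : ℕ) {x y : α} (hx : x ∈ lowSet α k) (hy : y < x) : y ∈ lowSet α k := by
  induction k generalizing x y with
  | zero => simp [lowSet] at hx
  | succ k ih =>
    rcases hx with hx | hx
    · exact Or.inl (ih hx hy)
    · exact Or.inl (hx.2 y hy)

theorem mem_lowSet_succ (k : ℕ) {x : α} :
    x ∈ lowSet α (k + 1) ↔ x ∈ lowSet α k ∨ x ∈ rankSet α k := Iff.rfl

theorem rankSet_not_lt {k : ℕ} {x y : α} (hx : x ∈ rankSet α k) (hy : y ∈ rankSet α k) :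
    ¬ x < y := fun h => hx.1 (hy.2 x h)

theorem rankSet_antichain (k : ℕ) : IsAntichain (· ≤ ·) (rankSet α k) := by
  intro x hx y hy hne hle
  exact rankSet_not_lt hx hy (lt_of_le_of_ne hle hne)

theorem exists_lt_of_mem_rankSet_succ {k : ℕ} {u : α} (hu : u ∈ rankSet α (k + 1)) :
    ∃ r ∈ rankSet α k, r < u := by
  by_contra! h
  refine hu.1 ?_
  rw [mem_lowSet_succ]
  refine Or.inr ⟨fun h' => hu.1 (Or.inl h'), fun y hy => ?_⟩
  rcases hu.2 y hy with h1 | h1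
  · exact h1
  · exact absurd hy (h y h1)

theorem exists_rankSet_le [Finite α] {k : ℕ} {x : α} (hx : x ∉ lowSet α k) :
    ∃ u ∈ rankSet α k, u ≤ x := by
  obtain ⟨m, hm, hmin⟩ := Set.Finite.exists_le_minimal (Set.toFinite {y : α | y ∉ lowSet α k}) hx
  refine ⟨m, ⟨hmin.1, fun y hy => ?_⟩, hm⟩
  by_contra h
  exact absurd (hmin.2 h hy.le) (not_le_of_gt hy)

/-- An automorphism restricted to a rank layer. -/
noncomputable def restrictPerm [Finite α] (Φ : α ≃o α) (k : ℕ) : Equiv.Perm (rankSet α k) :=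
  Equiv.ofBijective (fun x => ⟨Φ x.1, (rankSet_apply_iff Φ k x.1).2 x.2⟩)
    (Finite.injective_iff_bijective.1 (fun x y h => by
      simpa [Subtype.ext_iff] using h))

/-- `α(R_k)` is the maximal conceivable number iff every permutation of `R_k` is induced by an
automorphism. -/
theorem alphaRank_eq_factorial_iff [Finite α] (k : ℕ) :
    alphaRank α k = (rankSet α k).ncard.factorial ↔
      ∀ σ : Equiv.Perm (rankSet α k), ∃ Φ : α ≃o α, ∀ x, Φ x.1 = (σ x).1 := by
  set F : Equiv.Perm (rankSet α k) → (rankSet α k → α) := fun σ x => (σ x).1 with hF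
  have hFinj : Function.Injective F := by
    intro σ τ h
    ext x
    exact congrFun h x
  have hrange : (Set.range F).ncard = (rankSet α k).ncard.factorial := by
    rw [← Set.image_univ, Set.ncard_image_of_injective _ hFinj, Set.ncard_univ, Nat.card_perm]
    rfl
  have hsub : {g : ↥(rankSet α k) → α | ∃ Φ : α ≃o α, ∀ x : ↥(rankSet α k), g x = Φ x.1}
      ⊆ Set.range F := by
    rintro g ⟨Φ, hΦ⟩
    exact ⟨restrictPerm Φ k, funext fun x => (hΦ x).symm⟩
  unfold alphaRank
  rw [← hrange]
  constructor
  · intro h σ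
    have heq := Set.eq_of_subset_of_ncard_le hsub h.ge (Set.toFinite _)
    have : F σ ∈ Set.range F := ⟨σ, rfl⟩
    rw [← heq] at this
    obtain ⟨Φ, hΦ⟩ := this
    exact ⟨Φ, fun x => (hΦ x).symm⟩
  · intro h
    congr 1
    refine hsub.antisymm ?_
    rintro _ ⟨σ, rfl⟩
    obtain ⟨Φ, hΦ⟩ := h σ
    exact ⟨Φ, fun x => (hΦ x).symm⟩

/-! ### The layer `R_j` dominates all lower elements -/

/-- The elements of rank `< j` below no element of `R_j` form an invariant chain, whose least element
would be a common fixed point. -/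
theorem exists_le_of_mem_lowSet [Finite α] {w j : ℕ} (hw : 3 ≤ w)
    (hwidth : ∀ s : Set α, IsAntichain (· ≤ ·) s → s.ncard ≤ w)
    (hnofix : NoCommonFixedPoint α) (hcard : (rankSet α j).ncard = w - 1)
    {z : α} (hz : z ∈ lowSet α j) : ∃ r ∈ rankSet α j, z ≤ r := by
  by_contra! hzr
  set C : Set α := {z | z ∈ lowSet α j ∧ ∀ r ∈ rankSet α j, ¬ z ≤ r} with hC
  have hinv : ∀ (Φ : α ≃o α) (x : α), x ∈ C → Φ x ∈ C := by
    rintro Φ x ⟨h1, h2⟩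
    refine ⟨(lowSet_apply_iff Φ j x).2 h1, fun r hr hle => ?_⟩
    refine h2 (Φ.symm r) ((rankSet_apply_iff Φ.symm j r).2 hr) ?_
    rw [← Φ.le_iff_le]
    simpa using hle
  have hnle : ∀ x ∈ C, ∀ r ∈ rankSet α j, ¬ r ≤ x := by
    intro x hx r hr hle
    rcases hle.eq_or_lt with h | h
    · exact hr.1 (h ▸ hx.1)
    · exact hr.1 (lowSet_lower j hx.1 h)
  have hchain : ∀ x ∈ C, ∀ y ∈ C, x ≤ y ∨ y ≤ x := by
    intro x hx y hy
    by_contra! hxy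
    have hA : IsAntichain (· ≤ ·) (insert x (insert y (rankSet α j))) := by
      have h1 : IsAntichain (· ≤ ·) (insert y (rankSet α j)) :=
        (rankSet_antichain j).insert (fun r hr _ => hnle y hy r hr) (fun r hr _ => hy.2 r hr)
      refine h1.insert ?_ ?_
      · rintro r (rfl | hr) _
        · exact hxy.2
        · exact hnle x hx r hr
      · rintro r (rfl | hr) _
        · exact hxy.1
        · exact hx.2 r hr
    have hc := hwidth _ hA
    have hyR : y ∉ rankSet α j := fun h => h.1 hy.1
    have hxR : x ∉ insert y (rankSet α j) := by
      rintro (h | h)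
      · exact hxy.1 h.le
      · exact h.1 hx.1
    rw [Set.ncard_insert_of_notMem hxR (Set.toFinite _),
      Set.ncard_insert_of_notMem hyR (Set.toFinite _), hcard] at hc
    omega
  obtain ⟨m, -, hmin⟩ := Set.Finite.exists_le_minimal (Set.toFinite C) (show z ∈ C from ⟨hz, hzr⟩)
  have hleast : ∀ x ∈ C, m ≤ x := by
    intro x hx
    rcases hchain m hmin.1 x hx with h | h
    · exact h
    · exact hmin.2 hx h
  refine hnofix ⟨m, fun Φ => le_antisymm ?_ (hleast _ (hinv Φ m hmin.1))⟩
  have := hleast _ (hinv Φ.symm m hmin.1)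
  rw [← Φ.le_iff_le] at this
  simpa using this

theorem exists_not_lt [Finite α] {w j : ℕ} (hw : 3 ≤ w)
    (hwidth : ∀ s : Set α, IsAntichain (· ≤ ·) s → s.ncard ≤ w)
    (hnofix : NoCommonFixedPoint α) (hcard : (rankSet α j).ncard = w - 1)
    (hne : {x : α | x ∉ lowSet α (j + 1)}.Nonempty)
    (hnaut : ¬ OrdAutonomous α {x : α | x ∉ lowSet α (j + 1)}) :
    ∃ u ∈ rankSet α (j + 1), ∃ r ∈ rankSet α j, ¬ r < u := by
  by_contra! h
  refine hnaut ⟨hne, fun z hz => ?_⟩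
  have hz' : z ∈ lowSet α (j + 1) := by simpa using hz
  constructor
  · intro _ a ha
    obtain ⟨u, hu, hua⟩ := exists_rankSet_le ha
    obtain ⟨r, hr, hzr⟩ : ∃ r ∈ rankSet α j, z ≤ r := by
      rcases hz' with h1 | h1
      · exact exists_le_of_mem_lowSet hw hwidth hnofix hcard h1
      · exact ⟨z, h1, le_rfl⟩
    exact (hzr.trans_lt (h u hu r hr)).trans_le hua
  · rintro ⟨a, ha, haz⟩
    exact absurd (lowSet_lower _ hz' haz) ha

/-! ### Neighbourhood sizes -/

theorem add_two_le_choose (n k : ℕ) (hk : 2 ≤ k) (hkn : k + 2 ≤ n) : n + 2 ≤ n.choose k := by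
  induction n generalizing k with
  | zero => omega
  | succ n ih =>
    obtain ⟨a, rfl⟩ : ∃ a, k = a + 1 := ⟨k - 1, by omega⟩
    rw [Nat.choose_succ_succ]
    by_cases h : a + 1 + 2 ≤ n
    · have h1 := ih (a + 1) hk h
      have h2 : 0 < n.choose a := Nat.choose_pos (by omega)
      simp only [Nat.succ_eq_add_one]
      omega
    · by_cases h4 : n = 3
      · subst h4
        obtain rfl : a = 1 := by omega
        decide
      · have h1 := ih a (by omega) (by omega)
        have h2 : 0 < n.choose (a + 1) := Nat.choose_pos (by omega)
        simp only [Nat.succ_eq_add_one]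
        omega

open Classical in
/-- Some element of `R_{j+1}` is either above exactly one element of `R_j` or above all but
exactly one. -/
theorem exists_singular [Fintype α] {w j : ℕ} (hw : 3 ≤ w)
    (hwidth : ∀ s : Set α, IsAntichain (· ≤ ·) s → s.ncard ≤ w)
    (hcard : (rankSet α j).ncard = w - 1)
    (hsym : ∀ σ : Equiv.Perm (rankSet α j), ∃ Φ : α ≃o α, ∀ x, Φ x.1 = (σ x).1)
    (hnot : ∃ u ∈ rankSet α (j + 1), ∃ r ∈ rankSet α j, ¬ r < u) :
    ∃ u ∈ rankSet α (j + 1), ∃ r₀ : rankSet α j,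
      (∀ r : rankSet α j, r.1 < u ↔ r = r₀) ∨ (∀ r : rankSet α j, ¬ r.1 < u ↔ r = r₀) := by
  obtain ⟨u, hu, r₁, hr₁, hnlt⟩ := hnot
  obtain ⟨r₂, hr₂, hlt⟩ := exists_lt_of_mem_rankSet_succ hu
  -- lower neighbourhoods in `R_j`
  set D : α → Finset (rankSet α j) := fun v => Finset.univ.filter (fun r => r.1 < v) with hD
  have hcR : Fintype.card (rankSet α j) = w - 1 := by
    rw [← hcard, ← Nat.card_eq_fintype_card]; rfl
  have hsurj : Finset.powersetCard (D u).card Finset.univ ⊆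
      (Finset.univ.filter (fun v => v ∈ rankSet α (j + 1))).image D := by
    intro s hs
    rw [Finset.mem_powersetCard] at hs
    have e : {x // x ∈ D u} ≃ {x // x ∈ s} := Finset.equivOfCardEq hs.2.symm
    obtain ⟨Φ, hΦ⟩ := hsym e.extendSubtype
    rw [Finset.mem_image]
    refine ⟨Φ u, by simpa using (rankSet_apply_iff Φ _ u).2 hu, ?_⟩
    ext r
    obtain ⟨r', rfl⟩ := e.extendSubtype.surjective r
    have h1 : e.extendSubtype r' ∈ D (Φ u) ↔ r' ∈ D u := by
      simp only [hD, Finset.mem_filter, Finset.mem_univ, true_and]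
      rw [← hΦ, Φ.lt_iff_lt]
    rw [h1]
    constructor
    · intro h
      exact e.extendSubtype_mem r' h
    · intro h
      by_contra h'
      exact e.extendSubtype_not_mem r' h' h
  have hle : (w - 1).choose (D u).card ≤ w := by
    have h1 := (Finset.card_le_card hsurj).trans Finset.card_image_le
    rw [Finset.card_powersetCard, Finset.card_univ, hcR] at h1
    refine h1.trans ?_
    have h2 := hwidth _ (rankSet_antichain (α := α) (j + 1))
    rw [← Set.ncard_coe_finset]
    simpa using h2
  have hpos : 0 < (D u).card := Finset.card_pos.2 ⟨⟨r₂, hr₂⟩, by simpa [hD] using hlt⟩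
  have hlt' : (D u).card < w - 1 := by
    rw [← hcR]
    refine Finset.card_lt_univ_of_notMem (x := ⟨r₁, hr₁⟩) ?_
    simpa [hD] using hnlt
  have hcases : (D u).card = 1 ∨ (D u)ᶜ.card = 1 := by
    rw [Finset.card_compl, hcR]
    by_contra! hcon
    have := add_two_le_choose (w - 1) (D u).card (by omega) (by omega)
    omega
  refine ⟨u, hu, ?_⟩
  rcases hcases with h | h
  · obtain ⟨r₀, h0⟩ := Finset.card_eq_one.1 h
    refine ⟨r₀, Or.inl fun r => ?_⟩
    rw [← Finset.mem_singleton, ← h0]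
    simp [hD]
  · obtain ⟨r₀, h0⟩ := Finset.card_eq_one.1 h
    refine ⟨r₀, Or.inr fun r => ?_⟩
    rw [← Finset.mem_singleton, ← h0]
    simp [hD]

/-! ### The matching between `R_j` and `R_{j+1}` -/

/-- `E` stands for `<` or for its negation; some `u₀` in `R_{j+1}` is `E`-related to a single element
of `R_j`. -/
theorem exists_matching [Finite α] {w j : ℕ} (hw : 3 ≤ w)
    (hwidth : ∀ s : Set α, IsAntichain (· ≤ ·) s → s.ncard ≤ w)
    (hnofix : NoCommonFixedPoint α) (hcard : (rankSet α j).ncard = w - 1)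
    (hsym : ∀ σ : Equiv.Perm (rankSet α j), ∃ Φ : α ≃o α, ∀ x, Φ x.1 = (σ x).1)
    (E : α → α → Prop) (hE : ∀ (Φ : α ≃o α) x y, E (Φ x) (Φ y) ↔ E x y)
    (u₀ : α) (hu₀ : u₀ ∈ rankSet α (j + 1)) (r₀ : rankSet α j)
    (h0 : ∀ r : rankSet α j, E r.1 u₀ ↔ r = r₀) :
    ∃ f : rankSet α j ≃ rankSet α (j + 1), ∀ r r' : rankSet α j, E r.1 (f r').1 ↔ r = r' := by
  classical
  -- moving a labelled element by an automorphism moves its label along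
  have move : ∀ (Φ : α ≃o α) (σ : Equiv.Perm (rankSet α j)), (∀ x, Φ x.1 = (σ x).1) →
      ∀ (v : α) (s : rankSet α j), (∀ r : rankSet α j, E r.1 v ↔ r = s) →
        ∀ r : rankSet α j, E r.1 (Φ v) ↔ r = σ s := by
    intro Φ σ hΦ v s hv r
    obtain ⟨r', rfl⟩ := σ.surjective r
    rw [← hΦ, hE, hv, σ.injective.eq_iff]
  have hex : ∀ s : rankSet α j, ∃ u : rankSet α (j + 1), ∀ r : rankSet α j, E r.1 u.1 ↔ r = s := by
    intro s
    obtain ⟨Φ, hΦ⟩ := hsym (Equiv.swap r₀ s)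
    refine ⟨⟨Φ u₀, (rankSet_apply_iff Φ _ u₀).2 hu₀⟩, fun r => ?_⟩
    have := move Φ _ hΦ u₀ r₀ h0 r
    rwa [Equiv.swap_apply_left] at this
  choose f hf using hex
  have hinj : Function.Injective f := by
    intro s t hst
    have := (hf s s).2 rfl
    rw [hst] at this
    exact (hf t s).1 this
  have hsurj : Function.Surjective f := by
    by_contra hns
    obtain ⟨v, hv⟩ : ∃ v, ∀ s, f s ≠ v := by
      simpa [Function.Surjective] using hns
    -- there is room for only one element outside the range of `f`
    have huniq : ∀ v', (∀ s, f s ≠ v') → v' = v := by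
      intro v' hv'
      by_contra hvv
      have h1 : v ∉ Set.range f := by rintro ⟨s, hs⟩; exact hv s hs
      have h2 : v' ∉ insert v (Set.range f) := by
        rintro (h | ⟨s, hs⟩)
        · exact hvv h
        · exact hv' s hs
      have h3 : (insert v' (insert v (Set.range f))).ncard ≤ w := by
        refine (Set.ncard_le_card _).trans ?_
        exact hwidth _ (rankSet_antichain (j + 1))
      have h4 : (Set.range f).ncard = w - 1 := by
        rw [← Set.image_univ, Set.ncard_image_of_injective _ hinj, Set.ncard_univ, ← hcard]
        rfl
      rw [Set.ncard_insert_of_notMem h2 (Set.toFinite _),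
        Set.ncard_insert_of_notMem h1 (Set.toFinite _), h4] at h3
      omega
    -- a labelled `v` shares its label with some `f s`, unlike all other labels; an unlabelled `v` is fixed
    by_cases hlab : ∃ s : rankSet α j, ∀ r : rankSet α j, E r.1 v.1 ↔ r = s
    · obtain ⟨s, hs⟩ := hlab
      obtain ⟨t, ht⟩ : ∃ t : rankSet α j, t ≠ s := by
        have : 1 < Nat.card (rankSet α j) := by
          change 1 < (rankSet α j).ncard
          omega
        have := Finite.one_lt_card_iff_nontrivial.1 this
        exact exists_ne s
      obtain ⟨Φ, hΦ⟩ := hsym (Equiv.swap s t)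
      have honly : ∀ x : rankSet α (j + 1), (∀ r : rankSet α j, E r.1 x.1 ↔ r = s) →
          Φ x.1 = (f t).1 := by
        intro x hx
        have hm := move Φ _ hΦ x.1 s hx
        rw [Equiv.swap_apply_left] at hm
        by_contra hne
        set y : rankSet α (j + 1) := ⟨Φ x.1, (rankSet_apply_iff Φ _ x.1).2 x.2⟩ with hy
        have hyv : y = v := by
          refine huniq y fun a ha => ?_
          have h1 := (hf a a).2 rfl
          rw [ha] at h1
          have h2 := (hm a).1 h1
          subst h2
          exact hne (congrArg Subtype.val ha).symm
        have h1 : E t.1 y.1 := (hm t).2 rfl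
        rw [hyv] at h1
        exact ht ((hs t).1 h1)
      have h1 := honly v hs
      have h2 := honly (f s) (hf s)
      exact hv s (Subtype.ext (Φ.injective (h2.trans h1.symm)))
    · refine hnofix ⟨v.1, fun Φ => ?_⟩
      have := huniq ⟨Φ v.1, (rankSet_apply_iff Φ _ v.1).2 v.2⟩ ?_
      · exact congrArg Subtype.val this
      · intro a ha
        refine hlab ⟨(restrictPerm Φ j).symm a, fun r => ?_⟩
        have h1 := hf a (restrictPerm Φ j r)
        rw [ha] at h1
        rw [Equiv.eq_symm_apply, ← h1]
        exact (hE Φ r.1 v.1).symm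
  exact ⟨Equiv.ofBijective f ⟨hinj, hsurj⟩, fun r r' => hf r' r⟩

theorem alphaRank_succ_of_matching [Finite α] {j : ℕ}
    (hsym : ∀ σ : Equiv.Perm (rankSet α j), ∃ Φ : α ≃o α, ∀ x, Φ x.1 = (σ x).1)
    (E : α → α → Prop) (hE : ∀ (Φ : α ≃o α) x y, E (Φ x) (Φ y) ↔ E x y)
    (f : rankSet α j ≃ rankSet α (j + 1))
    (hf : ∀ r r' : rankSet α j, E r.1 (f r').1 ↔ r = r') :
    alphaRank α (j + 1) = (rankSet α j).ncard.factorial := by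
  have hc : (rankSet α j).ncard = (rankSet α (j + 1)).ncard := Nat.card_congr f
  rw [hc, alphaRank_eq_factorial_iff]
  intro σ
  -- transport `σ` to `R_j` along the matching
  obtain ⟨Φ, hΦ⟩ := hsym ((f.trans σ).trans f.symm)
  refine ⟨Φ, fun x => ?_⟩
  obtain ⟨r, rfl⟩ := f.surjective x
  obtain ⟨s, hs⟩ := f.surjective ⟨Φ (f r).1, (rankSet_apply_iff Φ _ (f r).1).2 (f r).2⟩
  have h1 : E (Φ r.1) (Φ (f r).1) := (hE Φ _ _).2 ((hf r r).2 rfl)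
  have h2 : Φ (f r).1 = (f s).1 := (congrArg Subtype.val hs).symm
  rw [h2, hΦ, hf] at h1
  rw [h2, ← h1]
  simp

/-- Coordinates on `R_j ∪ R_{j+1}` given by a matching: the `i`-th element of `R_j` is `(i, false)` and
its partner is `(i, true)`. -/
theorem exists_coordinates [Finite α] {n j : ℕ} (hcard : (rankSet α j).ncard = n)
    (f : rankSet α j ≃ rankSet α (j + 1)) :
    ∃ (g : Fin n ≃ rankSet α j)
      (e : ↥(rankSet α j ∪ rankSet α (j + 1)) ≃ Fin n × Bool),
      (∀ i, (e.symm (i, false)).1 = (g i).1) ∧ ∀ i, (e.symm (i, true)).1 = (f (g i)).1 := by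
  have g : Fin n ≃ rankSet α j := (Finite.equivFinOfCardEq hcard).symm
  have hdisj : ∀ (r : rankSet α j) (u : rankSet α (j + 1)), r.1 ≠ u.1 := by
    intro r u h
    exact u.2.1 (h ▸ Or.inr r.2)
  let h : Fin n × Bool → ↥(rankSet α j ∪ rankSet α (j + 1)) := fun p =>
    match p with
    | (i, false) => ⟨(g i).1, Or.inl (g i).2⟩
    | (i, true) => ⟨(f (g i)).1, Or.inr (f (g i)).2⟩
  have hb : Function.Bijective h := by
    constructor
    · rintro ⟨i, _ | _⟩ ⟨k, _ | _⟩ hik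
      · have := congrArg Subtype.val hik
        simpa [h, Subtype.val_inj] using this
      · exact absurd (congrArg Subtype.val hik) (hdisj _ _)
      · exact absurd (congrArg Subtype.val hik).symm (hdisj _ _)
      · have := congrArg Subtype.val hik
        simpa [h, Subtype.val_inj] using this
    · rintro ⟨x, hx | hx⟩
      · exact ⟨(g.symm ⟨x, hx⟩, false), by simp [h]⟩
      · exact ⟨(g.symm (f.symm ⟨x, hx⟩), true), by simp [h]⟩
  exact ⟨g, (Equiv.ofBijective h hb).symm, fun i => rfl, fun i => rfl⟩

theorem rank_le_iff {k : ℕ} (r s : rankSet α k) : r ≤ s ↔ r = s := by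
  constructor
  · intro h
    by_contra hne
    exact rankSet_not_lt r.2 s.2 (lt_of_le_of_ne (α := α) h fun h => hne (Subtype.ext h))
  · rintro rfl
    exact le_rfl

theorem rank_cross_le_iff {k : ℕ} (r : rankSet α k) (u : rankSet α (k + 1)) :
    r.1 ≤ u.1 ↔ r.1 < u.1 := by
  refine ⟨fun h => lt_of_le_of_ne h fun h => u.2.1 (h ▸ Or.inr r.2), le_of_lt⟩

theorem rank_cross_not_le {k : ℕ} (r : rankSet α k) (u : rankSet α (k + 1)) : ¬ u.1 ≤ r.1 := by
  intro h
  rcases h.eq_or_lt with h | h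
  · exact u.2.1 (h ▸ Or.inr r.2)
  · exact u.2.1 (lowSet_lower (k + 1) (Or.inr r.2) h)

theorem isoKC2_of_matching [Finite α] {n j : ℕ} (hcard : (rankSet α j).ncard = n)
    (f : rankSet α j ≃ rankSet α (j + 1))
    (hf : ∀ r r' : rankSet α j, r.1 < (f r').1 ↔ r = r') :
    IsoKC2 (↥(rankSet α j ∪ rankSet α (j + 1))) n := by
  obtain ⟨g, e, he0, he1⟩ := exists_coordinates hcard f
  refine ⟨e, fun x y => ?_⟩
  obtain ⟨p, rfl⟩ := e.symm.surjective x
  obtain ⟨q, rfl⟩ := e.symm.surjective y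
  rw [← Subtype.coe_le_coe]
  rcases p with ⟨i, _ | _⟩ <;> rcases q with ⟨k, _ | _⟩ <;>
    simp [he0, he1, rank_le_iff, rank_cross_le_iff, rank_cross_not_le, hf]

theorem isoSW_of_matching [Finite α] {n j : ℕ} (hcard : (rankSet α j).ncard = n)
    (f : rankSet α j ≃ rankSet α (j + 1))
    (hf : ∀ r r' : rankSet α j, ¬ r.1 < (f r').1 ↔ r = r') :
    IsoSW (↥(rankSet α j ∪ rankSet α (j + 1))) n := by
  have hf' : ∀ r r' : rankSet α j, r.1 < (f r').1 ↔ r ≠ r' := fun r r' => by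
    rw [ne_eq, ← hf, not_not]
  obtain ⟨g, e, he0, he1⟩ := exists_coordinates hcard f
  refine ⟨e, fun x y => ?_⟩
  obtain ⟨p, rfl⟩ := e.symm.surjective x
  obtain ⟨q, rfl⟩ := e.symm.surjective y
  rw [← Subtype.coe_le_coe]
  rcases p with ⟨i, _ | _⟩ <;> rcases q with ⟨k, _ | _⟩ <;>
    simp [he0, he1, rank_le_iff, rank_cross_le_iff, rank_cross_not_le, hf']

end RankLayers

theorem stmt4 {α : Type*} [Fintype α] [PartialOrder α] (w : ℕ) (hw : 3 ≤ w)
    (hwidth : HasWidthP α w) (hnofix : NoCommonFixedPoint α)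
    (j : ℕ) (hcard : (rankSet α j).ncard = w - 1)
    (halpha : alphaRank α j = Nat.factorial (w - 1))
    (hne : {x : α | x ∉ lowSet α (j + 1)}.Nonempty)
    (hnaut : ¬ OrdAutonomous α {x : α | x ∉ lowSet α (j + 1)}) :
    (IsoSW (↥(rankSet α j ∪ rankSet α (j + 1))) (w - 1) ∨
      IsoKC2 (↥(rankSet α j ∪ rankSet α (j + 1))) (w - 1)) ∧
    alphaRank α (j + 1) = Nat.factorial (w - 1) := by
  have hW := hwidth.2
  have hsym := (alphaRank_eq_factorial_iff (α := α) j).1 (by rw [halpha, hcard])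
  obtain ⟨u₀, hu₀, r₀, h | h⟩ := exists_singular hw hW hcard hsym
    (exists_not_lt hw hW hnofix hcard hne hnaut)
  · have hE : ∀ (Φ : α ≃o α) (x y : α), Φ x < Φ y ↔ x < y := fun Φ x y => Φ.lt_iff_lt
    obtain ⟨f, hf⟩ := exists_matching hw hW hnofix hcard hsym (fun x y => x < y) hE u₀ hu₀ r₀ h
    refine ⟨Or.inr (isoKC2_of_matching hcard f hf), ?_⟩
    rw [← hcard]
    exact alphaRank_succ_of_matching hsym (fun x y => x < y) hE f hf
  · have hE : ∀ (Φ : α ≃o α) (x y : α), ¬ Φ x < Φ y ↔ ¬ x < y := fun Φ x y => by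
      rw [Φ.lt_iff_lt]
    obtain ⟨f, hf⟩ := exists_matching hw hW hnofix hcard hsym (fun x y => ¬ x < y) hE u₀ hu₀ r₀ h
    refine ⟨Or.inl (isoSW_of_matching hcard f hf), ?_⟩
    rw [← hcard]
    exact alphaRank_succ_of_matching hsym (fun x y => ¬ x < y) hE f hf
end

section
/- Let P be a max-locked ordered set of width w ≥ 3. In case w ≠ 4, let k be a rank such that α(R_k) ≥ (w−1)!; in case w = 4, let k be a rank such that α(R_k) > 8. Then: (1) if R_k contains an element that is not maximal in P, then no two distinct elements of R_k have equal sets of upper covers; (2) if R_k contains an element that is not minimal in P, then no two distinct elements of R_k have equal sets of lower covers. -/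
namespace Locked

open Equiv

/-! ### Factorial estimates -/

theorem factorial_mul_lt (a b : ℕ) (ha : 2 ≤ a) (hb : 2 ≤ b) :
    a.factorial * b.factorial < (a + b - 1).factorial := by
  induction b, hb using Nat.le_induction with
  | base =>
    have h : a + 2 - 1 = a + 1 := by omega
    rw [h, Nat.factorial_succ a, Nat.factorial_two]
    have := Nat.factorial_pos a
    nlinarith
  | succ b hb ih =>
    have h : a + (b + 1) - 1 = (a + b - 1) + 1 := by omega
    have h2 : a + b - 1 + 1 = a + b := by omega
    rw [h, Nat.factorial_succ b, Nat.factorial_succ (a + b - 1), h2]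
    have hpos := Nat.factorial_pos (a + b - 1)
    calc a.factorial * ((b + 1) * b.factorial)
        = (b + 1) * (a.factorial * b.factorial) := by ring
      _ < (b + 1) * (a + b - 1).factorial := by gcongr
      _ ≤ (a + b) * (a + b - 1).factorial := Nat.mul_le_mul_right _ (by omega)

theorem succ_mul_factorial_mul_lt (a b : ℕ) (ha : 2 ≤ a) (hb : 3 ≤ b) :
    (a + b + 1) * (a.factorial * b.factorial) < (a + b).factorial := by
  induction b, hb using Nat.le_induction with
  | base =>
    have h3 : Nat.factorial 3 = 6 := rfl
    rw [h3, Nat.factorial_succ, Nat.factorial_succ, Nat.factorial_succ]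
    have := Nat.factorial_pos a
    have h : (a + 3 + 1) * 6 < (a + 2 + 1) * ((a + 1 + 1) * (a + 1)) := by
      nlinarith [mul_le_mul ha ha (by omega) (by omega), Nat.zero_le (a * a * a),
        mul_le_mul (mul_le_mul ha ha (by omega) (by omega)) ha (by omega) (by positivity)]
    calc (a + 3 + 1) * (a.factorial * 6) = ((a + 3 + 1) * 6) * a.factorial := by ring
      _ < ((a + 2 + 1) * ((a + 1 + 1) * (a + 1))) * a.factorial := by gcongr
      _ = _ := by ring
  | succ b hb ih =>
    rw [← add_assoc, Nat.factorial_succ (a + b), Nat.factorial_succ b]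
    have h : (a + b + 1 + 1) * (b + 1) ≤ (a + b + 1) * (a + b + 1) := by nlinarith
    have hpos : 0 < a + b + 1 := by omega
    have h2 : (a + b + 1) * ((a + b + 1) * (a.factorial * b.factorial))
        < (a + b + 1) * (a + b).factorial := by gcongr
    calc (a + b + 1 + 1) * (a.factorial * ((b + 1) * b.factorial))
        = ((a + b + 1 + 1) * (b + 1)) * (a.factorial * b.factorial) := by ring
      _ ≤ ((a + b + 1) * (a + b + 1)) * (a.factorial * b.factorial) := by gcongr
      _ = (a + b + 1) * ((a + b + 1) * (a.factorial * b.factorial)) := by ring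
      _ < _ := h2

theorem pairs_mul_factorial_lt (n : ℕ) (hn : 5 ≤ n) :
    (n * n - n) * (n - 4).factorial < (n - 1).factorial := by
  obtain ⟨m, rfl⟩ := Nat.exists_eq_add_of_le hn
  have h1 : 5 + m - 4 = m + 1 := by omega
  have h2 : 5 + m - 1 = m + 1 + 1 + 1 + 1 := by omega
  have h3 : (5 + m) * (5 + m) - (5 + m) = (5 + m) * (4 + m) := by
    rw [Nat.sub_eq_iff_eq_add (by nlinarith)]; ring
  rw [h1, h2, h3, Nat.factorial_succ (m + 1 + 1 + 1), Nat.factorial_succ (m + 1 + 1),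
    Nat.factorial_succ (m + 1)]
  have := Nat.factorial_pos (m + 1)
  have h : (5 + m) * (4 + m) < (m + 1 + 1 + 1 + 1) * ((m + 1 + 1 + 1) * (m + 1 + 1)) := by
    nlinarith [Nat.zero_le (m * m * m), Nat.zero_le (m * m)]
  calc _ < ((m + 1 + 1 + 1 + 1) * ((m + 1 + 1 + 1) * (m + 1 + 1))) * (m + 1).factorial := by gcongr
    _ = _ := by ring

/-! ### Orders of permutation groups -/

section Perm

variable {A : Type*} [Finite A]

/-- A set of permutations that preserve the fibers of `f` embeds into the product of the
symmetric groups of these fibers. -/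
theorem card_le_prod_fibers {ι : Type*} [Fintype ι] (f : A → ι) (K : Set (Perm A))
    (hK : ∀ σ ∈ K, ∀ a, f (σ a) = f a) :
    K.ncard ≤ ∏ i, (Set.ncard {a | f a = i}).factorial := by
  rw [← DomMulAct.stabilizer_ncard]
  exact Set.ncard_le_ncard (fun σ hσ => funext (hK σ hσ)) (Set.toFinite _)

/-- Orbit-stabilizer bound for the order of `G`: the orbit of `p` lies in `S`, and
the stabilizer of `p` preserves the fibers of `f`. -/
theorem card_le_orbit_mul {ι X : Type*} [Fintype ι] [Finite X] (G : Subgroup (Perm A))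
    [MulAction G X] (p : X) (S : Set X) (hS : ∀ σ : G, σ • p ∈ S) (f : A → ι)
    (hf : ∀ σ : G, σ • p = p → ∀ a, f (σ.1 a) = f a) :
    Nat.card G ≤ S.ncard * ∏ i, (Set.ncard {a | f a = i}).factorial := by
  rw [← Nat.card_congr (MulAction.orbitProdStabilizerEquivGroup G p), Nat.card_prod]
  refine Nat.mul_le_mul ?_ ?_
  · rw [Nat.card_coe_set_eq]
    refine Set.ncard_le_ncard ?_ (Set.toFinite _)
    rintro _ ⟨σ, rfl⟩
    exact hS σ
  · refine le_trans ?_ (card_le_prod_fibers f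
      ((fun σ : G => σ.1) '' (MulAction.stabilizer G p : Set G)) ?_)
    · rw [Set.ncard_image_of_injective _ Subtype.val_injective]
      exact (Nat.card_coe_set_eq _).le
    · rintro _ ⟨σ, hσ, rfl⟩ a
      exact hf σ hσ a

theorem factorial_eq_one_of_le_one {m : ℕ} (h : m ≤ 1) : m.factorial = 1 :=
  Nat.factorial_eq_one.2 h

/-- An intransitive permutation group without fixed points has order less than `(n-1)!`. -/
theorem card_lt_of_intransitive (G : Subgroup (Perm A))
    (hfix : ∀ x : A, ∃ σ ∈ G, σ x ≠ x) (x y : A) (hxy : ∀ σ ∈ G, σ x ≠ y) :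
    Nat.card G < (Nat.card A - 1).factorial := by
  classical
  let O : Set A := {z | ∃ σ ∈ G, σ x = z}
  have hO : ∀ σ ∈ G, ∀ a, σ a ∈ O ↔ a ∈ O := by
    intro σ hσ a
    constructor
    · rintro ⟨τ, hτ, h⟩
      exact ⟨σ⁻¹ * τ, G.mul_mem (G.inv_mem hσ) hτ, by simp [h]⟩
    · rintro ⟨τ, hτ, h⟩
      exact ⟨σ * τ, G.mul_mem hσ hτ, by simp [h]⟩
  have h2 : 2 ≤ O.ncard := by
    obtain ⟨σ, hσ, hne⟩ := hfix x
    exact (Set.one_lt_ncard_iff (Set.toFinite _)).2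
      ⟨σ x, x, ⟨σ, hσ, rfl⟩, ⟨1, G.one_mem, rfl⟩, hne⟩
  have h3 : 2 ≤ Oᶜ.ncard := by
    obtain ⟨σ, hσ, hne⟩ := hfix y
    have hy : y ∉ O := fun ⟨τ, hτ, h⟩ => hxy τ hτ h
    exact (Set.one_lt_ncard_iff (Set.toFinite _)).2
      ⟨σ y, y, fun h => hy ((hO σ hσ y).1 h), hy, hne⟩
  have hsum := Set.ncard_add_ncard_compl O
  have key := card_le_prod_fibers (fun a => decide (a ∈ O)) (G : Set (Perm A))
    (fun σ hσ a => by simp only [hO σ hσ a])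
  rw [Fintype.prod_bool] at key
  have e1 : {a | decide (a ∈ O) = true} = O := by ext; simp
  have e2 : {a | decide (a ∈ O) = false} = Oᶜ := by ext; simp
  rw [e1, e2, ← Nat.card_coe_set_eq] at key
  rw [← hsum]
  exact lt_of_le_of_lt key (factorial_mul_lt _ _ h2 h3)

/-- A transitive group of degree `n` preserving an equivalence relation that is neither
trivial nor total has order less than `(n-1)!`, or degree `4` and order at most `8`. -/
theorem card_lt_of_imprimitive (G : Subgroup (Perm A)) (htr : ∀ x y : A, ∃ σ ∈ G, σ x = y)
    (r : Setoid A) (hr : ∀ σ ∈ G, ∀ x y, r x y → r (σ x) (σ y))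
    (x y z : A) (hne : x ≠ y) (hxy : r x y) (hxz : ¬ r x z) :
    Nat.card G < (Nat.card A - 1).factorial ∨ (Nat.card A = 4 ∧ Nat.card G ≤ 8) := by
  classical
  set n := Nat.card A with hn
  have hr' : ∀ σ ∈ G, ∀ a b, r (σ a) (σ b) ↔ r a b := fun σ hσ a b =>
    ⟨fun h => by simpa using hr σ⁻¹ (G.inv_mem hσ) _ _ h, hr σ hσ a b⟩
  let C : Set A := {a | r x a}
  let D : Set A := {a | r z a}
  have hxC : x ∈ C := r.refl x
  have hCD : C.ncard ≤ D.ncard := by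
    obtain ⟨σ, hσ, h⟩ := htr x z
    refine Set.ncard_le_ncard_of_injOn σ (fun a ha => ?_) σ.injective.injOn (Set.toFinite _)
    have := hr σ hσ x a ha
    rwa [h] at this
  have hdisj : D ⊆ Cᶜ := fun a ha ha' => hxz (r.trans ha' (r.symm ha))
  have hDC : D.ncard ≤ Cᶜ.ncard := Set.ncard_le_ncard hdisj (Set.toFinite _)
  have hsum := Set.ncard_add_ncard_compl C
  have hC2 : 2 ≤ C.ncard :=
    (Set.one_lt_ncard_iff (Set.toFinite _)).2 ⟨x, y, hxC, hxy, hne⟩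
  have hCx : (C \ {x}).ncard = C.ncard - 1 := Set.ncard_sdiff_singleton_of_mem hxC
  -- The stabilizer of `x` preserves `{x}`, `C \ {x}` and the complement of `C`.
  have key : Nat.card G ≤ n * ((C.ncard - 1).factorial * Cᶜ.ncard.factorial) := by
    let f : A → Fin 3 := fun a => if a = x then 0 else if a ∈ C then 1 else 2
    have := card_le_orbit_mul G x Set.univ (fun _ => Set.mem_univ _) f ?_
    · rw [Fin.prod_univ_three, Set.ncard_univ, ← hn] at this
      have e0 : {a | f a = 0} = {x} := by
        ext a; simp only [f, Set.mem_ofPred_eq, Set.mem_singleton_iff]; split_ifs <;> simp_all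
      have e1 : {a | f a = 1} = C \ {x} := by
        ext a; simp only [f, Set.mem_ofPred_eq, Set.mem_sdiff, Set.mem_singleton_iff]
        split_ifs <;> simp_all
      have e2 : {a | f a = 2} = Cᶜ := by
        ext a; simp only [f, Set.mem_ofPred_eq, Set.mem_compl_iff]; split_ifs <;> simp_all
      rw [e0, e1, e2, hCx, Set.ncard_singleton, Nat.factorial_one, one_mul] at this
      exact this
    · intro σ hσ a
      have hσx : σ.1 x = x := hσ
      have h1 : σ.1 a = x ↔ a = x := by
        rw [← σ.1.injective.eq_iff (a := a), hσx]
      have h2 : σ.1 a ∈ C ↔ a ∈ C := by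
        have := hr' σ.1 σ.2 x a
        rwa [hσx] at this
      simp only [f, h1, h2]
  rcases Nat.lt_or_ge 2 C.ncard with hc | hc
  · left
    refine lt_of_le_of_lt key ?_
    have h := succ_mul_factorial_mul_lt (C.ncard - 1) Cᶜ.ncard (by omega) (by omega)
    have e : C.ncard - 1 + Cᶜ.ncard = n - 1 := by omega
    have e' : n - 1 + 1 = n := by omega
    rwa [e, e'] at h
  have hc2 : C.ncard = 2 := le_antisymm hc hC2
  have hCeq : C = {x, y} := by
    symm
    refine Set.eq_of_subset_of_ncard_le ?_ (by rw [hc2, Set.ncard_pair hne]) (Set.toFinite _)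
    rintro a (rfl | rfl)
    · exact hxC
    · exact hxy
  rcases Nat.lt_or_ge 4 n with hn5 | hn4
  · left
    -- All classes have two elements, so the stabilizer of `(x, z)` fixes `x, y, z, t`.
    have hDle : D.ncard ≤ 2 := by
      obtain ⟨σ, hσ, h⟩ := htr z x
      rw [← hc2]
      refine Set.ncard_le_ncard_of_injOn σ (fun a ha => ?_) σ.injective.injOn (Set.toFinite _)
      have := hr σ hσ z a ha
      rwa [h] at this
    have hD2 : D.ncard = 2 := by omega
    have hzD : z ∈ D := r.refl z
    obtain ⟨t, htD, htz⟩ := Set.exists_ne_of_one_lt_ncard (by omega : 1 < D.ncard) z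
    have hDeq : D = {z, t} := by
      symm
      refine Set.eq_of_subset_of_ncard_le ?_ (by rw [hD2, Set.ncard_pair htz.symm])
        (Set.toFinite _)
      rintro a (rfl | rfl)
      · exact hzD
      · exact htD
    have hfour : (C ∪ D).ncard = 4 := by
      rw [Set.ncard_union_eq (Set.disjoint_left.2 fun a ha hb => hdisj hb ha)
        (Set.toFinite _) (Set.toFinite _), hc2, hD2]
    have hcompl : (C ∪ D)ᶜ.ncard = n - 4 := by
      have := Set.ncard_add_ncard_compl (C ∪ D)
      omega
    let f : A → Fin 5 := fun a =>
      if a = x then 0 else if a = y then 1 else if a = z then 2 else if a = t then 3 else 4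
    have hS : {p : A × A | p.1 ≠ p.2}.ncard = n * n - n := by
      have hd : {p : A × A | p.1 ≠ p.2} = (Set.range fun a : A => (a, a))ᶜ := by
        ext ⟨a, b⟩; simp [eq_comm]
      have := Set.ncard_add_ncard_compl (Set.range fun a : A => (a, a))
      have hr : (Set.range fun a : A => (a, a)).ncard = n := by
        rw [← Set.image_univ, Set.ncard_image_of_injective _ (fun a b h => (Prod.ext_iff.1 h).1),
          Set.ncard_univ]
      rw [hr, Nat.card_prod, ← hn] at this
      rw [hd]; omega
    have := card_le_orbit_mul G (x, z) {p : A × A | p.1 ≠ p.2} ?_ f ?_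
    · refine lt_of_le_of_lt this ?_
      rw [hS, Fin.prod_univ_five]
      have e0 : {a | f a = 0}.ncard ≤ 1 := (Set.ncard_le_one (Set.toFinite _)).2 (by
        intro a ha b hb; simp only [f, Set.mem_ofPred_eq] at ha hb; grind)
      have e1 : {a | f a = 1}.ncard ≤ 1 := (Set.ncard_le_one (Set.toFinite _)).2 (by
        intro a ha b hb; simp only [f, Set.mem_ofPred_eq] at ha hb; grind)
      have e2 : {a | f a = 2}.ncard ≤ 1 := (Set.ncard_le_one (Set.toFinite _)).2 (by
        intro a ha b hb; simp only [f, Set.mem_ofPred_eq] at ha hb; grind)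
      have e3 : {a | f a = 3}.ncard ≤ 1 := (Set.ncard_le_one (Set.toFinite _)).2 (by
        intro a ha b hb; simp only [f, Set.mem_ofPred_eq] at ha hb; grind)
      have e4 : {a | f a = 4} = (C ∪ D)ᶜ := by
        ext a
        simp only [f, hCeq, hDeq, Set.mem_ofPred_eq, Set.mem_compl_iff, Set.mem_union,
          Set.mem_insert_iff, Set.mem_singleton_iff]
        grind
      rw [factorial_eq_one_of_le_one e0, factorial_eq_one_of_le_one e1,
        factorial_eq_one_of_le_one e2, factorial_eq_one_of_le_one e3, e4, hcompl]
      simpa using pairs_mul_factorial_lt n hn5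
    · intro σ h
      have h' : σ.1 x = σ.1 z := h
      exact hxz (by rw [σ.1.injective h'])
    · intro σ hσ a
      have hσx : σ.1 x = x := congrArg Prod.fst hσ
      have hσz : σ.1 z = z := congrArg Prod.snd hσ
      have hσy : σ.1 y = y := by
        have h : σ.1 y ∈ C := by
          have := hr σ.1 σ.2 x y hxy
          rwa [hσx] at this
        rw [hCeq] at h
        rcases h with h | h
        · exact absurd (σ.1.injective (h.trans hσx.symm)) hne.symm
        · exact h
      have hσt : σ.1 t = t := by
        have h : σ.1 t ∈ D := by
          have := hr σ.1 σ.2 z t htD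
          rwa [hσz] at this
        rw [hDeq] at h
        rcases h with h | h
        · exact absurd (σ.1.injective (h.trans hσz.symm)) htz
        · exact h
      have hiff : ∀ u, σ.1 u = u → (σ.1 a = u ↔ a = u) := fun u hu => by
        rw [← σ.1.injective.eq_iff (a := a), hu]
      simp only [f, hiff x hσx, hiff y hσy, hiff z hσz, hiff t hσt]
  · right
    have hn' : n = 4 := by omega
    have hcc : Cᶜ.ncard = 2 := by omega
    refine ⟨hn', key.trans ?_⟩
    rw [hn', hc2, hcc]
    decide

/-- The group-theoretic core: a fixed point free permutation group of degree at most `w` whose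
order meets the lower bound in the definition of max-lockedness has degree at least `w - 1`
and is primitive. -/
theorem invariant_trivial_or_total (w : ℕ) (hw : 3 ≤ w) (G : Subgroup (Perm A))
    (hA : Nat.card A ≤ w) (hfix : ∀ x : A, ∃ σ ∈ G, σ x ≠ x)
    (h1 : w ≠ 4 → (w - 1).factorial ≤ Nat.card G) (h2 : w = 4 → 8 < Nat.card G)
    (r : Setoid A) (hr : ∀ σ ∈ G, ∀ x y, r x y → r (σ x) (σ y)) :
    w - 1 ≤ Nat.card A ∧ ((∀ x y, r x y → x = y) ∨ ∀ x y, r x y) := by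
  classical
  have hle : Nat.card G ≤ (Nat.card A).factorial := by
    rw [← Nat.card_perm]
    exact Nat.card_le_card_of_injective _ Subtype.val_injective
  have hge : w - 1 ≤ Nat.card A := by
    by_contra hlt
    have hm : (Nat.card A).factorial ≤ (w - 2).factorial := Nat.factorial_le (by omega)
    by_cases h4 : w = 4
    · have := h2 h4
      subst h4
      have e : (4 - 2).factorial = 2 := rfl
      omega
    · have := h1 h4
      have : (w - 2).factorial < (w - 1).factorial :=
        (Nat.factorial_lt (by omega)).2 (by omega)
      omega
  refine ⟨hge, ?_⟩
  by_contra! hcon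
  obtain ⟨⟨x, y, hxy, hne⟩, u, v, huv⟩ := hcon
  obtain ⟨z, hxz⟩ : ∃ z, ¬ r x z := by
    by_contra! h
    exact huv (r.trans (r.symm (h u)) (h v))
  rcases Nat.lt_or_ge (Nat.card A) w with hlt | hge'
  · have hcard : Nat.card A = w - 1 := by omega
    have h4 : w ≠ 4 := by
      intro h4
      have := h2 h4
      rw [hcard, h4] at hle
      have e : (4 - 1).factorial = 6 := rfl
      omega
    have htop : G = ⊤ := by
      refine Subgroup.eq_top_of_le_card _ ?_
      rw [Nat.card_perm, hcard]
      exact h1 h4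
    have hzx : z ≠ x := fun h => hxz (h ▸ r.refl x)
    have := hr (swap y z) (htop ▸ Subgroup.mem_top _) x y hxy
    rw [swap_apply_left, swap_apply_of_ne_of_ne hne hzx.symm] at this
    exact hxz this
  · have hcard : Nat.card A = w := le_antisymm hA hge'
    have hbig : (w - 1).factorial ≤ Nat.card G := by
      by_cases h4 : w = 4
      · have := h2 h4
        subst h4
        have e : (4 - 1).factorial = 6 := rfl
        omega
      · exact h1 h4
    by_cases htr : ∀ x y : A, ∃ σ ∈ G, σ x = y
    · rcases card_lt_of_imprimitive G htr r hr x y z hne hxy hxz with h | ⟨h, h'⟩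
      · rw [hcard] at h; omega
      · have := h2 (by omega); omega
    · push Not at htr
      obtain ⟨a, b, hab⟩ := htr
      have := card_lt_of_intransitive G hfix a b hab
      rw [hcard] at this; omega

end Perm

/-! ### Invariant antichains -/

/-- The group of permutations of `A` induced by the automorphisms of the ordered set. -/
def inducedGroup {α : Type*} [PartialOrder α] (A : Set α) : Subgroup (Perm A) where
  carrier := {σ | ∃ Φ : α ≃o α, ∀ x : A, (σ x : α) = Φ x}
  one_mem' := ⟨OrderIso.refl α, fun _ => rfl⟩
  mul_mem' := by
    rintro σ τ ⟨Φ, hΦ⟩ ⟨Ψ, hΨ⟩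
    exact ⟨Ψ.trans Φ, fun x => by simp [hΦ, hΨ]⟩
  inv_mem' := by
    rintro σ ⟨Φ, hΦ⟩
    refine ⟨Φ.symm, fun x => ?_⟩
    rw [OrderIso.eq_symm_apply, ← hΦ]
    simp

/-- The permutation induced on an invariant set by an automorphism. -/
theorem exists_mem_inducedGroup {α : Type*} [PartialOrder α] (A : Set α)
    (hinv : ∀ (Φ : α ≃o α) (x : α), Φ x ∈ A ↔ x ∈ A) (Φ : α ≃o α) :
    ∃ σ ∈ inducedGroup A, ∀ x : A, (σ x : α) = Φ x :=
  ⟨Φ.toEquiv.subtypeEquiv fun x => (hinv Φ x).symm, ⟨Φ, fun _ => rfl⟩, fun _ => rfl⟩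

theorem apply_eq_of_le {α : Type*} [Finite α] [PartialOrder α] (Φ : α ≃o α) (z : α)
    (h : z ≤ Φ z) : Φ z = z := by
  by_contra hne
  have := Φ.strictMono.strictMono_iterate_of_lt_map (lt_of_le_of_ne h (Ne.symm hne))
  exact not_injective_infinite_finite _ this.injective

/-- In a coconnected ordered set without common fixed points, an invariant antichain `A` with at
least `w - 1` elements cannot have the property that something lies above `A` and all that
lies above one element of `A` lies above all of them. -/
theorem not_all_above {α : Type*} [Finite α] [PartialOrder α] (w : ℕ)
    (hco : CoconnectedP α) (hfp : NoCommonFixedPoint α)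
    (hwidth : ∀ s : Set α, IsAntichain (· ≤ ·) s → s.ncard ≤ w)
    (A : Set α) (hanti : IsAntichain (· ≤ ·) A) (hcard : w - 1 ≤ A.ncard)
    (hinv : ∀ (Φ : α ≃o α) (x : α), Φ x ∈ A ↔ x ∈ A)
    (hall : ∀ a ∈ A, ∀ b ∈ A, ∀ t, a < t → b < t) :
    ∀ a ∈ A, ∀ t, ¬ a < t := by
  intro a ha t hat
  by_cases hN : ∃ z, ∀ x ∈ A, ¬ x ≤ z ∧ ¬ z ≤ x
  · obtain ⟨z, hz⟩ := hN
    refine hfp ⟨z, fun Φ => ?_⟩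
    by_contra hne
    have hΦz : ∀ x ∈ A, ¬ x ≤ Φ z ∧ ¬ Φ z ≤ x := by
      intro x hx
      obtain ⟨y, rfl⟩ := Φ.surjective x
      rw [Φ.le_iff_le, Φ.le_iff_le]
      exact hz y ((hinv Φ y).1 hx)
    -- Two incomparable points of this kind would enlarge `A` to an antichain that is too big.
    have h1 : ¬ z ≤ Φ z := fun h => hne (apply_eq_of_le Φ z h)
    have h2 : ¬ Φ z ≤ z := fun h => hne (by
      have := apply_eq_of_le Φ.symm z (by rwa [OrderIso.le_symm_apply])
      rw [OrderIso.symm_apply_eq] at this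
      exact this.symm)
    have hanti2 : IsAntichain (· ≤ ·) (insert (Φ z) (insert z A)) := by
      refine (hanti.insert ?_ ?_).insert ?_ ?_
      · exact fun x hx _ => (hz x hx).1
      · exact fun x hx _ => (hz x hx).2
      · rintro x (rfl | hx) _
        · exact h1
        · exact (hΦz x hx).1
      · rintro x (rfl | hx) _
        · exact h2
        · exact (hΦz x hx).2
    have hzA : z ∉ A := fun h => (hz z h).1 le_rfl
    have hΦA : Φ z ∉ insert z A := by
      rintro (h | h)
      · exact hne h
      · exact (hΦz _ h).1 le_rfl
    have := hwidth _ hanti2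
    rw [Set.ncard_insert_of_notMem hΦA (Set.toFinite _),
      Set.ncard_insert_of_notMem hzA (Set.toFinite _)] at this
    omega
  · push Not at hN
    have hlt : ∀ b ∈ {b | ∃ x ∈ A, b ≤ x}, ∀ t ∈ {t | ∃ x ∈ A, x < t}, b < t := by
      rintro b ⟨x, hx, hbx⟩ s ⟨y, hy, hys⟩
      exact lt_of_le_of_lt hbx (hall y hy x hx s hys)
    refine hco ⟨{b | ∃ x ∈ A, b ≤ x}, {t | ∃ x ∈ A, x < t}, ⟨a, a, ha, le_rfl⟩,
      ⟨t, a, ha, hat⟩, ?_, ?_, hlt⟩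
    · exact Set.disjoint_left.2 fun b hb ht => lt_irrefl _ (hlt b hb b ht)
    · refine Set.eq_univ_of_forall fun s => ?_
      obtain ⟨x, hx, h⟩ := hN s
      by_cases hsx : s ≤ x
      · exact Or.inl ⟨x, hx, hsx⟩
      · have hxs : x ≤ s := by
          by_contra h'
          exact hsx (h h')
        exact Or.inr ⟨x, hx, lt_of_le_not_ge hxs hsx⟩

/-- The claim on upper covers, for an arbitrary invariant antichain in place of a rank set, so that
it applies to the dual order as well. -/
theorem upper_covers_ne {α : Type*} [Finite α] [PartialOrder α] (w : ℕ) (hw : 3 ≤ w)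
    (hco : CoconnectedP α) (hfp : NoCommonFixedPoint α)
    (hwidth : ∀ s : Set α, IsAntichain (· ≤ ·) s → s.ncard ≤ w)
    (A : Set α) (hanti : IsAntichain (· ≤ ·) A)
    (hinv : ∀ (Φ : α ≃o α) (x : α), Φ x ∈ A ↔ x ∈ A)
    (h1 : w ≠ 4 → (w - 1).factorial ≤ Nat.card (inducedGroup A))
    (h2 : w = 4 → 8 < Nat.card (inducedGroup A))
    (hmax : ∃ x ∈ A, ¬ IsMax x) :
    ∀ a ∈ A, ∀ b ∈ A, a ≠ b → {y : α | a ⋖ y} ≠ {y : α | b ⋖ y} := by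
  intro a ha b hb hab heq
  let r : Setoid A := Setoid.comap (fun x : A => {y : α | x.1 ⋖ y}) ⊥
  have hrdef : ∀ x y : A, r x y ↔ ∀ u : α, x.1 ⋖ u ↔ y.1 ⋖ u := fun x y =>
    ⟨fun h u => Set.ext_iff.1 h u, fun h => Set.ext h⟩
  have hr : ∀ σ ∈ inducedGroup A, ∀ x y, r x y → r (σ x) (σ y) := by
    rintro σ ⟨Φ, hΦ⟩ x y h
    rw [hrdef] at h ⊢
    intro u
    obtain ⟨v, rfl⟩ := Φ.surjective u
    rw [hΦ, hΦ, apply_covBy_apply_iff, apply_covBy_apply_iff]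
    exact h v
  have hfix : ∀ x : A, ∃ σ ∈ inducedGroup A, σ x ≠ x := by
    intro x
    by_contra! h
    refine hfp ⟨x, fun Φ => ?_⟩
    obtain ⟨σ, hσ, hσΦ⟩ := exists_mem_inducedGroup A hinv Φ
    rw [← hσΦ, h σ hσ]
  obtain ⟨hcard, htriv | htot⟩ := invariant_trivial_or_total w hw (inducedGroup A)
    ((Nat.card_coe_set_eq A).trans_le (hwidth A hanti)) hfix h1 h2 r hr
  · exact hab (congrArg Subtype.val (htriv ⟨a, ha⟩ ⟨b, hb⟩ heq))
  · rw [Nat.card_coe_set_eq] at hcard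
    obtain ⟨x, hx, hxmax⟩ := hmax
    obtain ⟨t, hxt⟩ := not_isMax_iff.1 hxmax
    refine not_all_above w hco hfp hwidth A hanti hcard hinv ?_ x hx t hxt
    intro c hc d hd s hcs
    obtain ⟨u, hcu, hus⟩ := exists_covBy_le_of_lt hcs
    have hdu := ((hrdef ⟨c, hc⟩ ⟨d, hd⟩).1 (htot _ _) u).1 hcu
    exact lt_of_lt_of_le hdu.lt hus

/-! ### Rank sets -/

theorem mem_lowSet_iff {α : Type*} [PartialOrder α] (Φ : α ≃o α) (k : ℕ) (x : α) :
    Φ x ∈ lowSet α k ↔ x ∈ lowSet α k := by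
  induction k generalizing x with
  | zero => exact Iff.rfl
  | succ k ih =>
    have : (∀ y, y < Φ x → y ∈ lowSet α k) ↔ ∀ y, y < x → y ∈ lowSet α k := by
      rw [Φ.surjective.forall]
      simp only [Φ.lt_iff_lt, ih]
    simp only [lowSet, Set.mem_union, Set.mem_ofPred_eq, ih, this]

theorem mem_rankSet_iff {α : Type*} [PartialOrder α] (k : ℕ) (Φ : α ≃o α) (x : α) :
    Φ x ∈ rankSet α k ↔ x ∈ rankSet α k := by
  have : (∀ y, y < Φ x → y ∈ lowSet α k) ↔ ∀ y, y < x → y ∈ lowSet α k := by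
    rw [Φ.surjective.forall]
    simp only [Φ.lt_iff_lt, mem_lowSet_iff]
  simp only [rankSet, Set.mem_ofPred_eq, mem_lowSet_iff, this]

theorem isAntichain_rankSet (α : Type*) [PartialOrder α] (k : ℕ) :
    IsAntichain (· ≤ ·) (rankSet α k) := fun x hx _ hy hne hle =>
  hx.1 (hy.2 x (lt_of_le_of_ne hle hne))

theorem alphaRank_le {α : Type*} [Finite α] [PartialOrder α] (k : ℕ) :
    alphaRank α k ≤ Nat.card (inducedGroup (rankSet α k)) := by
  have hsub : {g : ↥(rankSet α k) → α | ∃ Φ : α ≃o α, ∀ x : ↥(rankSet α k), g x = Φ x.1} ⊆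
      (fun (σ : Perm (rankSet α k)) x => (σ x : α)) ''
        (inducedGroup (rankSet α k) : Set (Perm (rankSet α k))) := by
    rintro g ⟨Φ, hΦ⟩
    obtain ⟨σ, hσ, h⟩ := exists_mem_inducedGroup _ (mem_rankSet_iff k) Φ
    exact ⟨σ, hσ, funext fun x => (h x).trans (hΦ x).symm⟩
  calc alphaRank α k ≤ _ := Set.ncard_le_ncard hsub (Set.toFinite _)
    _ ≤ (inducedGroup (rankSet α k) : Set (Perm (rankSet α k))).ncard :=
      Set.ncard_image_le (Set.toFinite _)
    _ = _ := (Nat.card_coe_set_eq _).symm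

end Locked

theorem stmt6 {α : Type*} [Fintype α] [PartialOrder α] (w : ℕ) (hw : 3 ≤ w)
    (hml : MaxLockedBase α) (hwidth : HasWidthP α w)
    (k : ℕ)
    (hk1 : w ≠ 4 → Nat.factorial (w - 1) ≤ alphaRank α k)
    (hk2 : w = 4 → 8 < alphaRank α k) :
    ((∃ x ∈ rankSet α k, ¬ IsMax x) →
      ∀ a ∈ rankSet α k, ∀ b ∈ rankSet α k, a ≠ b → {y : α | a ⋖ y} ≠ {y : α | b ⋖ y}) ∧
    ((∃ x ∈ rankSet α k, ¬ IsMin x) →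
      ∀ a ∈ rankSet α k, ∀ b ∈ rankSet α k, a ≠ b → {y : α | y ⋖ a} ≠ {y : α | y ⋖ b}) := by
  obtain ⟨hco, hfp, -⟩ := hml
  have hle := Locked.alphaRank_le (α := α) k
  have h1 := fun h => (hk1 h).trans hle
  have h2 := fun h => (hk2 h).trans_le hle
  refine ⟨Locked.upper_covers_ne w hw hco hfp hwidth.2 _ (Locked.isAntichain_rankSet α k)
    (Locked.mem_rankSet_iff k) h1 h2, fun hmin a ha b hb hab heq => ?_⟩
  -- The same rank set, seen as an invariant antichain of the dual order.
  have hcod : CoconnectedP αᵒᵈ := by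
    rintro ⟨B, T, hB, hT, hd, hu, hlt⟩
    exact hco ⟨T, B, hT, hB, hd.symm, (Set.union_comm T B).trans hu,
      fun b hb t ht => hlt t ht b hb⟩
  have hfpd : NoCommonFixedPoint αᵒᵈ := fun ⟨p, hp⟩ => hfp ⟨p, fun Φ => hp Φ.dual⟩
  have hwd : ∀ s : Set αᵒᵈ, IsAntichain (· ≤ ·) s → s.ncard ≤ w := fun s hs =>
    hwidth.2 s hs.flip
  have hG : Nat.card (Locked.inducedGroup (rankSet α k)) ≤
      Nat.card (Locked.inducedGroup (α := αᵒᵈ) (rankSet α k)) := by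
    refine Nat.card_le_card_of_injective
      (fun σ => ⟨σ.1, ?_⟩) fun σ τ h => ?_
    · obtain ⟨σ, Φ, hΦ⟩ := σ
      exact ⟨Φ.dual, hΦ⟩
    · have h' : σ.1 = τ.1 := (Subtype.mk.injEq ..).mp h
      exact Subtype.ext h'
  refine Locked.upper_covers_ne (α := αᵒᵈ) w hw hcod hfpd hwd (rankSet α k)
    (Locked.isAntichain_rankSet α k).flip
    (fun Φ x => Locked.mem_rankSet_iff k (OrderIso.dual Φ) x)
    (fun h => (h1 h).trans hG) (fun h => (h2 h).trans_le hG) hmin a ha b hb hab ?_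
  refine Set.ext fun (y : α) => ?_
  have hy : y ⋖ a ↔ y ⋖ b := Set.ext_iff.1 heq y
  exact toDual_covBy_toDual_iff.trans (hy.trans toDual_covBy_toDual_iff.symm)
end

section
/- Let P be a max-locked ordered set of height 1 and width w ≥ 3. Then P is order-isomorphic to S_w or to wC_2. -/
open scoped Pointwise Nat
open Equiv MulAction

/-! ### Factorial estimates -/

/-- Among products `d! * e!` with a fixed sum `d + e` and both factors at least `a`, the
largest is the most unbalanced one. -/
theorem ml_fact_mul_le {a d e : ℕ} (hd : a ≤ d) (he : a ≤ e) :
    d ! * e ! ≤ a ! * (d + e - a)! := by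
  obtain ⟨t, rfl⟩ := Nat.exists_eq_add_of_le hd
  have h1 : a + t + e - a = e + t := by omega
  rw [h1]
  clear h1 hd
  induction t with
  | zero => simp
  | succ t ih =>
    have h2 : (a + (t + 1))! = (a + t + 1) * (a + t)! := by
      rw [← Nat.factorial_succ]; rfl
    have h3 : (e + (t + 1))! = (e + t + 1) * (e + t)! := by
      rw [← Nat.factorial_succ]; rfl
    rw [h2, h3]
    calc (a + t + 1) * (a + t)! * e ! = (a + t + 1) * ((a + t)! * e !) := by ring
      _ ≤ (e + t + 1) * (a ! * (e + t)!) := Nat.mul_le_mul (by omega) ih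
      _ = _ := by ring

theorem ml_num_two {w d : ℕ} (h1 : 2 ≤ d) (h2 : d + 2 ≤ w) :
    d ! * (w - d)! ≤ 2 * (w - 2)! := by
  have := ml_fact_mul_le (a := 2) (d := d) (e := w - d) h1 (by omega)
  rwa [show d + (w - d) - 2 = w - 2 by omega, Nat.factorial_two] at this

theorem ml_num_three {w d : ℕ} (h1 : 3 ≤ d) (h2 : d + 3 ≤ w) :
    w * (d ! * (w - d)!) < 2 * (w - 1)! := by
  have := ml_fact_mul_le (a := 3) (d := d) (e := w - d) h1 (by omega)
  rw [show d + (w - d) - 3 = w - 3 by omega, show 3 ! = 6 from rfl] at this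
  obtain ⟨v, rfl⟩ : ∃ v, w = v + 6 := ⟨w - 6, by omega⟩
  have h3 : (v + 6 - 1)! = (v + 5) * ((v + 4) * (v + 3)!) := by
    rw [← Nat.factorial_succ, ← Nat.factorial_succ]; rfl
  rw [h3]
  rw [show v + 6 - 3 = v + 3 by omega] at this
  have hp := Nat.factorial_pos (v + 3)
  calc _ ≤ (v + 6) * (6 * (v + 3)!) := Nat.mul_le_mul le_rfl this
    _ = ((v + 6) * 6) * (v + 3)! := by ring
    _ < (2 * ((v + 5) * (v + 4))) * (v + 3)! := Nat.mul_lt_mul_of_pos_right (by nlinarith) hp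
    _ = _ := by ring

/-! ### Large permutation groups -/

/-- A permutation stabilizing `A` is determined by its restrictions to `A` and to `Aᶜ`. -/
theorem ml_card_stab_le {X : Type*} [Finite X] (A : Set X) :
    Nat.card (stabilizer (Perm X) A) ≤ A.ncard ! * (Nat.card X - A.ncard)! := by
  classical
  have hmem : ∀ σ : stabilizer (Perm X) A, ∀ x, σ.1 x ∈ A ↔ x ∈ A := fun σ x =>
    (MulAction.mem_stabilizer_set.1 σ.2) x
  let f : stabilizer (Perm X) A → Perm A × Perm (Aᶜ : Set X) := fun σ =>
    (σ.1.subtypePerm (fun x => hmem σ x), σ.1.subtypePerm (fun x => not_congr (hmem σ x)))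
  have hf : Function.Injective f := by
    intro σ τ h
    ext x
    by_cases hx : x ∈ A
    · have := congrArg (fun p => ((p.1 ⟨x, hx⟩ : A) : X)) h
      simpa [f] using this
    · have := congrArg (fun p => ((p.2 ⟨x, hx⟩ : (Aᶜ : Set X)) : X)) h
      simpa [f] using this
  have := Nat.card_le_card_of_injective f hf
  rwa [Nat.card_prod, Nat.card_perm, Nat.card_perm, Nat.card_coe_set_eq, Nat.card_coe_set_eq,
    Set.ncard_compl] at this

theorem ml_card_le_of_orbit {X : Type*} [Finite X] (G : Subgroup (Perm X)) (A : Set X) {w : ℕ}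
    (h : (orbit G A).ncard ≤ w) :
    Nat.card G ≤ w * Nat.card (G ⊓ stabilizer (Perm X) A : Subgroup (Perm X)) := by
  have h1 : Nat.card G = Nat.card (orbit G A) * Nat.card (stabilizer G A) := by
    rw [← Nat.card_prod]
    exact Nat.card_congr (MulAction.orbitProdStabilizerEquivGroup G A).symm
  rw [h1, Nat.card_coe_set_eq]
  refine Nat.mul_le_mul h ?_
  let f : stabilizer G A → (G ⊓ stabilizer (Perm X) A : Subgroup (Perm X)) :=
    fun σ => ⟨σ.1.1, σ.1.2, σ.2⟩
  refine Nat.card_le_card_of_injective f ?_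
  intro σ τ hs
  have h2 : (f σ : Perm X) = f τ := by rw [hs]
  exact Subtype.ext (Subtype.ext h2)

/-- A subgroup of index one or two contains all squares. -/
theorem ml_sq_mem {Γ : Type*} [Group Γ] [Finite Γ] {H K : Subgroup Γ} (hle : H ≤ K)
    (h : Nat.card K < 3 * Nat.card H) {g : Γ} (hg : g ∈ K) : g ^ 2 ∈ H := by
  have h1 := Subgroup.card_mul_index (H.subgroupOf K)
  have h2 : Nat.card (H.subgroupOf K) = Nat.card H :=
    Nat.card_congr (Subgroup.subgroupOfEquivOfLe hle).toEquiv
  rw [h2] at h1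
  have hpos : 0 < Nat.card K := Nat.card_pos
  have hi : (H.subgroupOf K).index = 1 ∨ (H.subgroupOf K).index = 2 := by
    have a : (H.subgroupOf K).index < 3 := by
      by_contra hc
      push Not at hc
      have := Nat.mul_le_mul_left (Nat.card H) hc
      omega
    have b : (H.subgroupOf K).index ≠ 0 := by
      intro hc
      rw [hc] at h1
      omega
    omega
  rcases hi with hi | hi
  · rw [Subgroup.index_eq_one, Subgroup.subgroupOf_eq_top] at hi
    exact H.pow_mem (hi hg) 2
  · have := Subgroup.sq_mem_of_index_two hi ⟨g, hg⟩
    rw [Subgroup.mem_subgroupOf] at this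
    simpa using this

theorem ml_eq_of_card {Γ : Type*} [Group Γ] [Finite Γ] {H K : Subgroup Γ} (hle : H ≤ K)
    (h : Nat.card K < 2 * Nat.card H) : H = K := by
  apply Subgroup.eq_of_le_of_card_ge hle
  obtain ⟨c, hc⟩ := Subgroup.card_dvd_of_le hle
  have hpos : 0 < Nat.card K := Nat.card_pos
  rw [hc] at h hpos ⊢
  have : c < 2 := by
    by_contra hcc
    push Not at hcc
    have := Nat.mul_le_mul_left (Nat.card H) hcc
    omega
  have : c = 1 := by
    rcases Nat.lt_or_ge c 1 with h0 | h0
    · have : c = 0 := by omega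
      subst this; simp at hpos
    · omega
  simp [this]

/-- A permutation group of order at least `(w - 1)!` (more than `8` if `w = 4`) on `w` points
without fixed points is transitive: otherwise it stabilizes an orbit `S` with
`2 ≤ |S| ≤ w - 2`, and hence has order at most `2 * (w - 2)!`. -/
theorem ml_transitive {X : Type*} [Finite X] {w : ℕ} (hX : Nat.card X = w) (G : Subgroup (Perm X))
    (hG : (w - 1)! ≤ Nat.card G) (h4 : w = 4 → 8 < Nat.card G)
    (hfix : ∀ x, ∃ g ∈ G, g x ≠ x) (x y : X) : ∃ g ∈ G, g x = y := by
  classical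
  by_contra hy
  set S : Set X := {z | ∃ g ∈ G, g x = z} with hS
  have hyS : y ∉ S := hy
  have hinv : ∀ g ∈ G, ∀ z, g z ∈ S ↔ z ∈ S := by
    intro g hg z
    constructor
    · rintro ⟨k, hk, hkz⟩
      exact ⟨g⁻¹ * k, G.mul_mem (G.inv_mem hg) hk, by simp [hkz]⟩
    · rintro ⟨k, hk, rfl⟩
      exact ⟨g * k, G.mul_mem hg hk, rfl⟩
  have hle : G ≤ stabilizer (Perm X) S := fun g hg => MulAction.mem_stabilizer_set.2 (hinv g hg)
  have hxS : x ∈ S := ⟨1, G.one_mem, rfl⟩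
  have h2 : 1 < S.ncard := by
    rw [Set.one_lt_ncard (Set.toFinite _)]
    obtain ⟨g, hg, hgx⟩ := hfix x
    exact ⟨g x, ⟨g, hg, rfl⟩, x, hxS, hgx⟩
  have h3 : 1 < Sᶜ.ncard := by
    rw [Set.one_lt_ncard (Set.toFinite _)]
    obtain ⟨g, hg, hgx⟩ := hfix y
    exact ⟨g y, fun h => hyS ((hinv g hg y).1 h), y, hyS, hgx⟩
  have h5 := Set.ncard_add_ncard_compl S
  have h6 := Subgroup.card_le_of_le hle
  have h7 := ml_card_stab_le S
  have h8 := ml_num_two (w := w) (d := S.ncard) h2 (by omega)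
  rw [hX] at h7
  rcases eq_or_ne w 4 with rfl | hw4
  · have := h4 rfl
    simp at h8
    omega
  · obtain ⟨v, rfl⟩ : ∃ v, w = v + 5 := ⟨w - 5, by omega⟩
    have h9 : (v + 5 - 1)! = (v + 4) * (v + 5 - 2)! := by
      rw [show v + 5 - 1 = (v + 3) + 1 by omega, Nat.factorial_succ]; rfl
    rw [h9] at hG
    have := Nat.factorial_pos (v + 5 - 2)
    nlinarith

/-! ### Orbits of subsets under large permutation groups -/

theorem ml_mem_orbit {X : Type*} {G : Subgroup (Perm X)} {A B : Set X} {g : Perm X} (hg : g ∈ G)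
    (hB : B ∈ orbit G A) : g • B ∈ orbit G A := by
  obtain ⟨k, rfl⟩ := hB
  exact ⟨⟨g, hg⟩ * k, by simp [mul_smul]⟩

theorem ml_apply_inv {X : Type*} (g : Perm X) (x : X) : g (g⁻¹ x) = x := by simp

theorem ml_smul_pair {X : Type*} (g : Perm X) (x y : X) : g • ({x, y} : Set X) = {g x, g y} :=
  Set.image_pair _ _ _

theorem ml_pair_le {Z : Type*} (x y : Z) : ({x, y} : Set Z).ncard ≤ 2 :=
  (Set.ncard_insert_le _ _).trans (by simp)

theorem ml_exists_third {X : Type*} [Finite X] {S : Set X} (h : 3 ≤ S.ncard) (x y : X) : ∃ z ∈ S, z ≠ x ∧ z ≠ y := by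
  obtain ⟨z, hz, hz'⟩ := Set.exists_mem_notMem_of_ncard_lt_ncard
    (s := {x, y}) (t := S) (by have := ml_pair_le x y; omega)
  simp only [Set.mem_insert_iff, Set.mem_singleton_iff, not_or] at hz'
  exact ⟨z, hz, hz'⟩

theorem ml_swap_trans {X : Type*} {G : Subgroup (Perm X)} [DecidableEq X] {a b c : X} (h1 : swap a b ∈ G)
    (h2 : swap b c ∈ G) : swap a c ∈ G := by
  rcases eq_or_ne c a with rfl | hca
  · rw [swap_self]; exact G.one_mem
  rcases eq_or_ne c b with rfl | hcb
  · exact h1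
  have h := Equiv.swap_apply_apply (swap a b) b c
  rw [swap_apply_right, swap_apply_of_ne_of_ne hca hcb] at h
  rw [h]
  exact G.mul_mem (G.mul_mem h1 h2) (G.inv_mem h1)

/-- If the orbit of a set `A` with `3 ≤ |A| ≤ w - 3` had at most `w` members, then `G` would
contain the whole stabilizer of `A` in the symmetric group, so every transposition inside `A` or
inside `Aᶜ`. Either `G` also contains a transposition mixing the two, and is the full symmetric
group, or every translate of `A` is `A` or `Aᶜ`. Both contradict the order estimates. -/
theorem ml_core_three {X : Type*} [Finite X] {w : ℕ} (hX : Nat.card X = w) (G : Subgroup (Perm X))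
    (hG : (w - 1)! ≤ Nat.card G) (A : Set X) (h1 : 3 ≤ A.ncard) (h2 : A.ncard + 3 ≤ w)
    (ho : (orbit G A).ncard ≤ w) : False := by
  classical
  have hK := ml_card_le_of_orbit G A ho
  have hY := ml_card_stab_le A
  have hN := ml_num_three h1 h2
  rw [hX] at hY
  have hw : 6 ≤ w := by omega
  have hpos := Nat.factorial_pos (w - 1)
  -- the stabilizer of `A` in `G` has index less than two in the full stabilizer
  have hlt : Nat.card (stabilizer (Perm X) A) <
      2 * Nat.card (G ⊓ stabilizer (Perm X) A : Subgroup (Perm X)) := by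
    by_contra hc
    push Not at hc
    have := Nat.mul_le_mul_left w (hc.trans hY)
    nlinarith
  have hYG : stabilizer (Perm X) A ≤ G := by
    rw [← ml_eq_of_card inf_le_right hlt]; exact inf_le_left
  have hswap : ∀ a b : X, (a ∈ A ↔ b ∈ A) → swap a b ∈ G := by
    intro a b hab
    apply hYG
    rw [MulAction.mem_stabilizer_set]
    intro x
    rw [Perm.smul_def, swap_apply_def]
    split_ifs with ha hb
    · rw [ha, hab]
    · rw [hb, hab]
    · rfl
  have hswap' : ∀ g ∈ G, ∀ a b : X, (a ∈ g • A ↔ b ∈ g • A) → swap a b ∈ G := by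
    intro g hg a b hab
    have := Equiv.swap_apply_apply g (g⁻¹ a) (g⁻¹ b)
    rw [ml_apply_inv, ml_apply_inv] at this
    rw [this]
    rw [Set.mem_smul_set_iff_inv_smul_mem, Set.mem_smul_set_iff_inv_smul_mem] at hab
    exact G.mul_mem (G.mul_mem hg (hswap _ _ hab)) (G.inv_mem hg)
  obtain ⟨a₀, ha₀⟩ : A.Nonempty := by
    rw [← Set.ncard_pos]; omega
  obtain ⟨b₀, hb₀⟩ : Aᶜ.Nonempty := by
    rw [← Set.ncard_pos]
    have := Set.ncard_add_ncard_compl A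
    omega
  by_cases hmix : ∃ a ∈ A, ∃ b ∉ A, swap a b ∈ G
  · obtain ⟨a, ha, b, hb, hab⟩ := hmix
    have hba : swap b a ∈ G := by rwa [swap_comm]
    have hall : ∀ x y : X, swap x y ∈ G := by
      intro x y
      have key : ∀ z, swap z a ∈ G := by
        intro z
        by_cases hz : z ∈ A
        · exact hswap _ _ (by tauto)
        · exact ml_swap_trans (hswap z b (by tauto)) hba
      exact ml_swap_trans (key x) (by rw [swap_comm]; exact key y)
    have htop : G = ⊤ := by
      rw [eq_top_iff, ← Equiv.Perm.closure_isSwap, Subgroup.closure_le]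
      rintro σ ⟨x, y, -, rfl⟩
      exact hall x y
    have hc : Nat.card G = w ! := by
      rw [htop, Subgroup.card_top, Nat.card_perm, hX]
    have hf : w ! = w * (w - 1)! := (Nat.mul_factorial_pred (by omega)).symm
    have h3 := Subgroup.card_le_of_le (inf_le_right : G ⊓ stabilizer (Perm X) A ≤ _)
    have := Nat.mul_le_mul_left w (h3.trans hY)
    nlinarith
  · push Not at hmix
    have hsub : orbit G A ⊆ {A, Aᶜ} := by
      rintro _ ⟨⟨g, hg⟩, rfl⟩
      have hA : (⟨g, hg⟩ : G) • A = g • A := rfl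
      simp only [hA]
      have hne : ∀ a ∈ A, ∀ b ∉ A, ¬ (a ∈ g • A ↔ b ∈ g • A) := fun a ha b hb h =>
        hmix a ha b hb (hswap' g hg a b h)
      have hb₀' : b₀ ∉ A := hb₀
      by_cases h : a₀ ∈ g • A
      · left
        ext x
        have e1 := hne a₀ ha₀ b₀ hb₀
        by_cases hx : x ∈ A
        · have := hne x hx b₀ hb₀; tauto
        · have := hne a₀ ha₀ x hx; tauto
      · right
        ext x
        rw [Set.mem_compl_iff]
        have e1 := hne a₀ ha₀ b₀ hb₀
        by_cases hx : x ∈ A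
        · have := hne x hx b₀ hb₀; tauto
        · have := hne a₀ ha₀ x hx; tauto
    have ho2 : (orbit G A).ncard ≤ 2 :=
      (Set.ncard_le_ncard hsub (Set.toFinite _)).trans (ml_pair_le _ _)
    have hK2 := ml_card_le_of_orbit G A ho2
    have h3 := Subgroup.card_le_of_le (inf_le_right : G ⊓ stabilizer (Perm X) A ≤ _)
    have h4 : (w - 1)! ≤ 2 * (A.ncard ! * (w - A.ncard)!) := by omega
    nlinarith

/-- A three-cycle is the square of its square. -/
theorem ml_rotate_pow {X : Type*} [Finite X] [DecidableEq X] {a b c : X} (hab : a ≠ b) (hac : a ≠ c) (hbc : b ≠ c) :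
    ((swap a b * swap a c) ^ 2) ^ 2 = swap a b * swap a c := by
  have : Fintype X := Fintype.ofFinite X
  have h := (Equiv.Perm.isThreeCycle_swap_mul_swap_same hab hac hbc).orderOf
  have h3 := pow_orderOf_eq_one (swap a b * swap a c)
  rw [h] at h3
  rw [← pow_mul, show 2 * 2 = 3 + 1 from rfl, pow_succ, h3, one_mul]

/-- A subgroup of index one or two contains every three-cycle of the larger group. -/
theorem ml_rotate_mem {X : Type*} [Finite X] [DecidableEq X] {H K : Subgroup (Perm X)} (hle : H ≤ K)
    (h : Nat.card K < 3 * Nat.card H) {a b c : X} (hab : a ≠ b) (hac : a ≠ c) (hbc : b ≠ c)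
    (hg : swap a b * swap a c ∈ K) : swap a b * swap a c ∈ H := by
  rw [← ml_rotate_pow hab hac hbc]
  exact ml_sq_mem hle h (K.pow_mem hg 2)

/-- If the orbit of `A` contains all pairs through one point `p`, then by transitivity it
contains all pairs, and there are more than `w` of these. -/
theorem ml_star {X : Type*} [Finite X] {w : ℕ} (hX : Nat.card X = w) (hw : 4 ≤ w) (G : Subgroup (Perm X))
    (htr : ∀ x y : X, ∃ g ∈ G, g x = y) (A : Set X)
    (ho : (orbit G A).ncard ≤ w) (p : X) (hp : ∀ x, x ≠ p → {p, x} ∈ orbit G A) : False := by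
  have hall : ∀ x y : X, x ≠ y → ({x, y} : Set X) ∈ orbit G A := by
    intro x y hxy
    obtain ⟨g, hg, rfl⟩ := htr p x
    have h1 : g⁻¹ y ≠ p := by
      rintro rfl; simp at hxy
    have := ml_mem_orbit hg (hp _ h1)
    rwa [ml_smul_pair, ml_apply_inv] at this
  have hsub : {s : Set X | s.ncard = 2} ⊆ orbit G A := by
    intro s hs
    obtain ⟨x, y, hxy, rfl⟩ := Set.ncard_eq_two.1 hs
    exact hall x y hxy
  have h1 := (Set.ncard_le_ncard hsub (Set.toFinite _)).trans ho
  have : Fintype X := Fintype.ofFinite X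
  classical
  have h2 : (Finset.powersetCard 2 (Finset.univ : Finset X)).card ≤
      {s : Set X | s.ncard = 2}.ncard := by
    rw [← Set.ncard_coe_finset]
    refine Set.ncard_le_ncard_of_injOn (fun s : Finset X => (s : Set X)) ?_ ?_ (Set.toFinite _)
    · intro s hs
      simp at hs
      simp [Set.ncard_coe_finset, hs]
    · intro s _ t _ h
      exact Finset.coe_injective h
  rw [Finset.card_powersetCard, Finset.card_univ, ← Nat.card_eq_fintype_card, hX] at h2
  have h3 : w.choose 2 ≤ w := h2.trans h1
  rw [Nat.choose_two_right] at h3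
  obtain ⟨v, rfl⟩ : ∃ v, w = v + 4 := ⟨w - 4, by omega⟩
  have h4 : (v + 4) * 3 ≤ (v + 4) * (v + 4 - 1) := Nat.mul_le_mul_left _ (by omega)
  omega

theorem ml_rot_fix {X : Type*} [DecidableEq X] {a b c x : X} (ha : x ≠ a) (hb : x ≠ b) (hc : x ≠ c) :
    (swap a b * swap a c) x = x := by
  rw [Perm.mul_apply, swap_apply_of_ne_of_ne ha hc, swap_apply_of_ne_of_ne ha hb]

theorem ml_rot_move {X : Type*} [DecidableEq X] {a b c : X} (ha : b ≠ a) (hc : b ≠ c) :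
    (swap a b * swap a c) b = a := by
  rw [Perm.mul_apply, swap_apply_of_ne_of_ne ha hc, swap_apply_right]

/-- The orbit of a pair `A` has more than `w` members. If not, the stabilizer of `A` in `G` has
index at most two in the full stabilizer (for `w = 4`, `G` itself has index at most two), hence
`G` contains all three-cycles on `Aᶜ` (for `w = 4`, all three-cycles). These and transitivity
produce all pairs through some point of `A`, contradicting `ml_star`. -/
theorem ml_core_two {X : Type*} [Finite X] {w : ℕ} (hX : Nat.card X = w) (hw : 4 ≤ w) (G : Subgroup (Perm X))
    (hG : (w - 1)! ≤ Nat.card G) (h4 : w = 4 → 8 < Nat.card G)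
    (htr : ∀ x y : X, ∃ g ∈ G, g x = y) (A : Set X) (hA : A.ncard = 2)
    (ho : (orbit G A).ncard ≤ w) : False := by
  classical
  have hself : A ∈ orbit G A := mem_orbit_self A
  have hcompl : Aᶜ.ncard + 2 = w := by
    have := Set.ncard_add_ncard_compl A; omega
  obtain ⟨p, q, hpq, hApq⟩ := Set.ncard_eq_two.1 hA
  have hself' : {p, q} ∈ orbit G A := by rw [← hApq]; exact hself
  rcases eq_or_ne w 4 with rfl | hw4
  · have hrot : ∀ a b c : X, a ≠ b → a ≠ c → b ≠ c → swap a b * swap a c ∈ G := by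
      intro a b c hab hac hbc
      refine ml_rotate_mem (le_top : G ≤ ⊤) ?_ hab hac hbc trivial
      rw [Subgroup.card_top, Nat.card_perm, hX]
      have := h4 rfl
      simp only [Nat.factorial]
      omega
    refine ml_star hX hw G htr A ho p ?_
    intro x hxp
    rcases eq_or_ne x q with rfl | hxq
    · rwa [← hApq]
    obtain ⟨c, hc, hcx⟩ : ∃ c ∈ Aᶜ, c ≠ x := Set.exists_ne_of_one_lt_ncard (by omega) x
    have hcp : c ≠ p := by rintro rfl; simp [hApq] at hc
    have hcq : c ≠ q := by rintro rfl; simp [hApq] at hc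
    have := ml_mem_orbit (hrot x q c hxq hcx.symm hcq.symm) hself'
    rwa [ml_smul_pair, ml_rot_fix hxp.symm hpq hcp.symm, ml_rot_move hxq.symm hcq.symm] at this
  · have h3 : 3 ≤ Aᶜ.ncard := by omega
    have hrot : ∀ a b c : X, a ∉ A → b ∉ A → c ∉ A → a ≠ b → a ≠ c → b ≠ c →
        swap a b * swap a c ∈ G := by
      intro a b c ha hb hc hab hac hbc
      have hsw : ∀ x y : X, x ∉ A → y ∉ A → swap x y ∈ stabilizer (Perm X) A := by
        intro x y hx hy
        rw [MulAction.mem_stabilizer_set]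
        intro z
        rw [Perm.smul_def, swap_apply_def]
        split_ifs with h1 h2
        · subst h1; tauto
        · subst h2; tauto
        · rfl
      refine (ml_rotate_mem (H := G ⊓ stabilizer (Perm X) A) (K := stabilizer (Perm X) A)
        inf_le_right ?_ hab hac hbc (Subgroup.mul_mem _ (hsw _ _ ha hb) (hsw _ _ ha hc))).1
      have hK := ml_card_le_of_orbit G A ho
      have hY := ml_card_stab_le A
      rw [hX, hA, Nat.factorial_two] at hY
      obtain ⟨v, rfl⟩ : ∃ v, w = v + 5 := ⟨w - 5, by omega⟩
      have h9 : (v + 5 - 1)! = (v + 4) * (v + 5 - 2)! := by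
        rw [show v + 5 - 1 = (v + 3) + 1 by omega, Nat.factorial_succ]; rfl
      rw [h9] at hG
      have hpos := Nat.factorial_pos (v + 5 - 2)
      by_contra hlt
      push Not at hlt
      have := Nat.mul_le_mul_left (v + 5) (hlt.trans hY)
      nlinarith
    have hstar : ∀ p ∈ A, ∀ b ∉ A, {p, b} ∈ orbit G A → False := by
      intro p hp b hb hpb
      refine ml_star hX hw G htr A ho p ?_
      intro x hxp
      by_cases hxA : x ∈ A
      · have : ({p, x} : Set X) = A := by
          refine Set.eq_of_subset_of_ncard_le ?_ ?_
          · rintro z (rfl | rfl) <;> assumption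
          · rw [hA, Set.ncard_pair hxp.symm]
        rwa [this]
      · rcases eq_or_ne x b with rfl | hxb
        · exact hpb
        obtain ⟨c, hc, hcx, hcb⟩ := ml_exists_third h3 x b
        have hc' : c ∉ A := hc
        have := ml_mem_orbit (hrot x b c hxA hb hc hxb hcx.symm hcb.symm) hpb
        have hpb' : p ≠ b := by rintro rfl; exact hb hp
        have hpc' : p ≠ c := by rintro rfl; exact hc hp
        rwa [ml_smul_pair, ml_rot_fix hxp.symm hpb' hpc',
          ml_rot_move hxb.symm hcb.symm] at this
    -- move `p` out of `A`; the image of `A` is either a pair of the form required by `hstar`,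
    -- or disjoint from `A`, and then a three-cycle makes it overlap itself in one point
    obtain ⟨b, hb, -⟩ := ml_exists_third h3 p p
    have hb' : b ∉ A := hb
    obtain ⟨g, hg, hgp⟩ := htr p b
    have hA' := ml_mem_orbit hg hself'
    rw [ml_smul_pair, hgp] at hA'
    have hcb : g q ≠ b := by
      rw [← hgp]; exact fun h => hpq (g.injective h).symm
    by_cases hc : g q ∈ A
    · rw [Set.pair_comm] at hA'
      exact hstar _ hc b hb hA'
    · obtain ⟨e, he, heb, hec⟩ := ml_exists_third h3 b (g q)
      have h1 := ml_mem_orbit (hrot e b (g q) he hb hc heb hec hcb.symm) hA'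
      have h2 : (swap e b * swap e (g q)) (g q) = b := by
        rw [Perm.mul_apply, swap_apply_right, swap_apply_left]
      rw [ml_smul_pair, h2, ml_rot_move heb.symm hcb.symm] at h1
      have h5 := ml_mem_orbit (G.inv_mem hg) h1
      have h6 : g⁻¹ b = p := by rw [← hgp]; simp
      rw [ml_smul_pair, h6, Set.pair_comm] at h5
      refine hstar p (by simp [hApq]) _ ?_ h5
      intro h7
      rw [hApq] at h7
      rcases h7 with h7 | h7
      · exact heb (by rw [← hgp, ← h7]; simp)
      · rw [Set.mem_singleton_iff] at h7
        exact hec (by rw [← h7]; simp)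

theorem ml_orbit_compl {X : Type*} (G : Subgroup (Perm X)) (A : Set X) :
    (orbit G Aᶜ).ncard = (orbit G A).ncard := by
  have : orbit G Aᶜ = compl '' orbit G A := by
    ext s
    constructor
    · rintro ⟨g, rfl⟩
      exact ⟨g • A, ⟨g, rfl⟩, (Set.smul_set_compl).symm⟩
    · rintro ⟨_, ⟨g, rfl⟩, rfl⟩
      exact ⟨g, Set.smul_set_compl⟩
  rw [this, Set.ncard_image_of_injective _ compl_injective]

/-- The group-theoretic core: a set that is neither empty, nor everything, nor a point, nor the
complement of a point has more than `w` translates under `G`. -/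
theorem ml_core {X : Type*} [Finite X] {w : ℕ} (G : Subgroup (Perm X))
    (hG : (Nat.card X = w ∧ (w - 1)! ≤ Nat.card G ∧ (w = 4 → 8 < Nat.card G)) ∨
      (Nat.card X + 1 = w ∧ G = ⊤))
    (htr : ∀ x y : X, ∃ g ∈ G, g x = y) (A : Set X) (h1 : 2 ≤ A.ncard)
    (h2 : A.ncard + 2 ≤ Nat.card X) (ho : (orbit G A).ncard ≤ w) : False := by
  rcases hG with ⟨hX, hG, h4⟩ | ⟨hX, rfl⟩
  · have hc := Set.ncard_add_ncard_compl A
    by_cases h3 : A.ncard = 2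
    · exact ml_core_two hX (by omega) G hG h4 htr A h3 ho
    by_cases h5 : A.ncard + 2 = w
    · exact ml_core_two hX (by omega) G hG h4 htr Aᶜ (by omega) (by rwa [ml_orbit_compl])
    · exact ml_core_three hX G hG A (by omega) (by omega) ho
  · have hK := ml_card_le_of_orbit _ A ho
    have hY := ml_card_stab_le A
    have hN := ml_num_two h1 h2
    rw [top_inf_eq, Subgroup.card_top, Nat.card_perm] at hK
    have := Nat.mul_le_mul_left w (hY.trans hN)
    obtain ⟨v, hv⟩ : ∃ v, Nat.card X = v + 4 := ⟨Nat.card X - 4, by omega⟩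
    rw [hv] at hK this hX
    have h9 : (v + 4)! = (v + 4) * ((v + 3) * (v + 4 - 2)!) := by
      rw [Nat.factorial_succ, Nat.factorial_succ]; rfl
    have hpos := Nat.factorial_pos (v + 4 - 2)
    subst hX
    have h6 : (v + 4) * (v + 3) * (v + 4 - 2)! ≤ ((v + 4 + 1) * 2) * (v + 4 - 2)! := by
      nlinarith
    have := Nat.le_of_mul_le_mul_right h6 hpos
    nlinarith

/-! ### Ordered sets with two levels -/

/-- Recognition of `wC_2` from enumerations `L` of the lower and `U` of the upper level. -/
theorem ml_iso_kc2 {α : Type*} [PartialOrder α] {w : ℕ} (L U : Fin w → α)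
    (hsurj : ∀ a, (∃ i, L i = a) ∨ ∃ i, U i = a) (hLL : ∀ i j, L i ≤ L j → i = j)
    (hUU : ∀ i j, U i ≤ U j → i = j) (hUL : ∀ i j, ¬ U i ≤ L j)
    (hLU : ∀ i j, L i ≤ U j ↔ i = j) : IsoKC2 α w := by
  let E : Fin w × Bool → α := fun p => bif p.2 then U p.1 else L p.1
  have hE : Function.Bijective E := by
    constructor
    · rintro ⟨i, _ | _⟩ ⟨j, _ | _⟩ h
      · rw [hLL i j h.le]
      · exact (hUL j i h.ge).elim
      · exact (hUL i j h.le).elim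
      · rw [hUU i j h.le]
    · intro a
      rcases hsurj a with ⟨i, rfl⟩ | ⟨i, rfl⟩
      exacts [⟨(i, false), rfl⟩, ⟨(i, true), rfl⟩]
  refine ⟨(Equiv.ofBijective E hE).symm, fun x y => ?_⟩
  obtain ⟨p, rfl⟩ := hE.2 x
  obtain ⟨q, rfl⟩ := hE.2 y
  rw [Equiv.ofBijective_symm_apply_apply, Equiv.ofBijective_symm_apply_apply]
  obtain ⟨i, _ | _⟩ := p <;> obtain ⟨j, _ | _⟩ := q
  · simpa [E] using ⟨hLL i j, fun h => h ▸ le_rfl⟩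
  · simpa [E] using hLU i j
  · exact ⟨fun h => (hUL i j h).elim, fun h => absurd h.2 (show ¬ (true ≤ false) by decide)⟩
  · simpa [E] using ⟨hUU i j, fun h => h ▸ le_rfl⟩

/-- Recognition of `S_w` from enumerations `L` of the lower and `U` of the upper level. -/
theorem ml_iso_sw {α : Type*} [PartialOrder α] {w : ℕ} (L U : Fin w → α)
    (hsurj : ∀ a, (∃ i, L i = a) ∨ ∃ i, U i = a) (hLL : ∀ i j, L i ≤ L j → i = j)
    (hUU : ∀ i j, U i ≤ U j → i = j) (hUL : ∀ i j, ¬ U i ≤ L j)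
    (hLU : ∀ i j, L i ≤ U j ↔ i ≠ j) : IsoSW α w := by
  let E : Fin w × Bool → α := fun p => bif p.2 then U p.1 else L p.1
  have hE : Function.Bijective E := by
    constructor
    · rintro ⟨i, _ | _⟩ ⟨j, _ | _⟩ h
      · rw [hLL i j h.le]
      · exact (hUL j i h.ge).elim
      · exact (hUL i j h.le).elim
      · rw [hUU i j h.le]
    · intro a
      rcases hsurj a with ⟨i, rfl⟩ | ⟨i, rfl⟩
      exacts [⟨(i, false), rfl⟩, ⟨(i, true), rfl⟩]
  refine ⟨(Equiv.ofBijective E hE).symm, fun x y => ?_⟩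
  obtain ⟨p, rfl⟩ := hE.2 x
  obtain ⟨q, rfl⟩ := hE.2 y
  rw [Equiv.ofBijective_symm_apply_apply, Equiv.ofBijective_symm_apply_apply]
  obtain ⟨i, _ | _⟩ := p <;> obtain ⟨j, _ | _⟩ := q
  · simpa [E] using ⟨hLL i j, fun h => h ▸ le_rfl⟩
  · simpa [E] using hLU i j
  · simpa [E] using hUL i j
  · simpa [E] using ⟨hUU i j, fun h => h ▸ le_rfl⟩

/-- Restriction of automorphisms to an invariant set `X`, as a homomorphism into the
permutations of `X`. -/
def mlRes {α : Type*} [PartialOrder α] (X : Set α)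
    (hinv : ∀ (Φ : α ≃o α) (x : α), Φ x ∈ X ↔ x ∈ X) : (α ≃o α) →* Equiv.Perm X where
  toFun Φ := Φ.toEquiv.subtypeEquiv (fun x => (hinv Φ x).symm)
  map_one' := by ext; rfl
  map_mul' _ _ := by ext; rfl

/-- The elements of `X` that are strictly comparable to `y`. -/
def mlNbr {α : Type*} [PartialOrder α] (X : Set α) (y : α) : Set X :=
  {x | (x : α) < y ∨ y < x}

theorem mlRes_apply {α : Type*} [PartialOrder α] (X : Set α)
    (hinv : ∀ (Φ : α ≃o α) (x : α), Φ x ∈ X ↔ x ∈ X) (Φ : α ≃o α) (x : X) :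
    ((mlRes X hinv Φ x : X) : α) = Φ x := rfl

/-- Neighbourhoods are equivariant under automorphisms. -/
theorem mlNbr_map {α : Type*} [PartialOrder α] (X : Set α)
    (hinv : ∀ (Φ : α ≃o α) (x : α), Φ x ∈ X ↔ x ∈ X) (Φ : α ≃o α) (y : α) :
    mlNbr X (Φ y) = mlRes X hinv Φ • mlNbr X y := by
  ext x
  rw [Set.mem_smul_set_iff_inv_smul_mem]
  obtain ⟨x', rfl⟩ := (mlRes X hinv Φ).surjective x
  have : (mlRes X hinv Φ)⁻¹ • (mlRes X hinv Φ x') = x' := by simp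
  rw [this]
  simp [mlNbr, mlRes_apply]

/-- The conclusion for an ordered set made of two levels `X` and `Xᶜ`, where `X` is the level
with many restricted automorphisms. The hypothesis `hside` says that `X` is the lower or the upper
level, so that both cases are treated at once. -/
theorem ml_structure {α : Type*} [Finite α] [PartialOrder α] {w : ℕ} (hw : 3 ≤ w) (X : Set α)
    (hinv : ∀ (Φ : α ≃o α) (x : α), Φ x ∈ X ↔ x ∈ X)
    (hX : IsAntichain (· ≤ ·) X) (hXc : IsAntichain (· ≤ ·) Xᶜ)
    (hside : (∀ x ∈ X, ∀ y ∉ X, ¬ y < x) ∨ (∀ x ∈ X, ∀ y ∉ X, ¬ x < y))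
    (hne : Xᶜ.Nonempty) (hco : CoconnectedP α) (hfix : NoCommonFixedPoint α)
    (hwidth : HasWidthP α w)
    (hG : (w - 1)! ≤ Nat.card (mlRes X hinv).range)
    (h4 : w = 4 → 8 < Nat.card (mlRes X hinv).range) :
    IsoSW α w ∨ IsoKC2 α w := by
  classical
  have hfix' : ∀ p : α, ∃ Φ : α ≃o α, Φ p ≠ p := by
    intro p
    by_contra h
    push Not at h
    exact hfix ⟨p, h⟩
  set G := (mlRes X hinv).range with hGdef
  have hle : Nat.card G ≤ (Nat.card X)! := by
    rw [← Nat.card_perm]; exact Subgroup.card_le_card_group G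
  have hnw : Nat.card X ≤ w := by
    rw [Nat.card_coe_set_eq]; exact hwidth.2 X hX
  have hcw : Xᶜ.ncard ≤ w := hwidth.2 _ hXc
  have hn1 : w - 1 ≤ Nat.card X := by
    by_contra hc
    have h1 : (Nat.card X)! ≤ (w - 2)! := Nat.factorial_le (by omega)
    have h2 : (w - 2)! < (w - 1)! := Nat.factorial_lt_of_lt (by omega) (by omega)
    omega
  have hcase : (Nat.card X = w ∧ (w - 1)! ≤ Nat.card G ∧ (w = 4 → 8 < Nat.card G)) ∨
      (Nat.card X + 1 = w ∧ G = ⊤) := by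
    rcases eq_or_ne (Nat.card X) w with h | h
    · exact Or.inl ⟨h, hG, h4⟩
    · refine Or.inr ⟨by omega, ?_⟩
      apply Subgroup.eq_top_of_le_card
      rw [Nat.card_perm, show Nat.card X = w - 1 by omega]
      exact hG
  have htr : ∀ x y : X, ∃ g ∈ G, g x = y := by
    rcases hcase with ⟨h, -, -⟩ | ⟨-, h⟩
    · refine ml_transitive h G hG h4 ?_
      intro x
      obtain ⟨Φ, hΦ⟩ := hfix' x
      exact ⟨_, ⟨Φ, rfl⟩, fun h => hΦ (congrArg Subtype.val h)⟩
    · intro x y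
      exact ⟨Equiv.swap x y, h ▸ Subgroup.mem_top _, Equiv.swap_apply_left x y⟩
  have htr' : ∀ x y : X, ∃ Φ : α ≃o α, mlRes X hinv Φ x = y := by
    intro x y
    obtain ⟨_, ⟨Φ, rfl⟩, h⟩ := htr x y
    exact ⟨Φ, h⟩
  -- the translates of a neighbourhood are neighbourhoods of points of `Xᶜ`, so there are at
  -- most `w` of them
  have hdeg : ∀ y ∉ X, 2 ≤ (mlNbr X y).ncard → (mlNbr X y).ncard + 2 ≤ Nat.card X → False := by
    intro y hy h1 h2
    refine ml_core G hcase htr (mlNbr X y) h1 h2 (le_trans ?_ hcw)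
    have hsub : MulAction.orbit G (mlNbr X y) ⊆ mlNbr X '' Xᶜ := by
      rintro _ ⟨⟨_, ⟨Φ, rfl⟩⟩, rfl⟩
      exact ⟨Φ y, fun h => hy ((hinv Φ y).1 h), mlNbr_map X hinv Φ y⟩
    exact (Set.ncard_le_ncard hsub (Set.toFinite _)).trans (Set.ncard_image_le (Set.toFinite _))
  by_cases hex : ∃ y ∉ X, mlNbr X y ≠ ∅ ∧ mlNbr X y ≠ Set.univ
  swap
  · exfalso
    push Not at hex
    -- a point `y` with empty neighbourhood is moved to a second such point, and adding both to `X`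
    -- gives an antichain with more than `w` elements
    have hfull : ∀ y ∉ X, mlNbr X y = Set.univ := by
      intro y hy
      by_contra hyu
      have hy0 : mlNbr X y = ∅ := by
        by_contra h
        exact hyu (hex y hy (Set.nonempty_iff_ne_empty.2 h))
      obtain ⟨Φ, hΦ⟩ := hfix' y
      have hΦy : Φ y ∉ X := fun h => hy ((hinv Φ y).1 h)
      have hΦ0 : mlNbr X (Φ y) = ∅ := by
        rw [mlNbr_map X hinv, hy0, Set.smul_set_empty]
      have hno : ∀ z ∉ X, mlNbr X z = ∅ → ∀ x ∈ X, ¬ x ≤ z ∧ ¬ z ≤ x := by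
        intro z hz h0 x hx
        have : (⟨x, hx⟩ : X) ∉ mlNbr X z := by rw [h0]; simp
        have hxz : x ≠ z := fun h => hz (h ▸ hx)
        simp only [mlNbr, Set.mem_ofPred_eq, not_or] at this
        exact ⟨fun h => this.1 (lt_of_le_of_ne h hxz), fun h => this.2 (lt_of_le_of_ne h hxz.symm)⟩
      have hanti : IsAntichain (· ≤ ·) (insert y (insert (Φ y) X)) := by
        refine (hX.insert ?_ ?_).insert ?_ ?_
        · intro b hb _; exact (hno _ hΦy hΦ0 b hb).1
        · intro b hb _; exact (hno _ hΦy hΦ0 b hb).2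
        · rintro b (rfl | hb) hne
          · exact hXc hΦy hy hΦ
          · exact (hno _ hy hy0 b hb).1
        · rintro b (rfl | hb) hne
          · exact hXc hy hΦy hΦ.symm
          · exact (hno _ hy hy0 b hb).2
      have h1 := hwidth.2 _ hanti
      rw [Set.ncard_insert_of_notMem _ (Set.toFinite _),
        Set.ncard_insert_of_notMem hΦy (Set.toFinite _), ← Nat.card_coe_set_eq] at h1
      · omega
      · rintro (h | h)
        · exact hΦ h.symm
        · exact hy h
    have hcmp : ∀ x ∈ X, ∀ y ∉ X, x < y ∨ y < x := by
      intro x hx y hy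
      have : (⟨x, hx⟩ : X) ∈ mlNbr X y := by rw [hfull y hy]; trivial
      exact this
    have hXne : X.Nonempty := by
      rw [← Set.ncard_pos (Set.toFinite _), ← Nat.card_coe_set_eq]; omega
    rcases hside with hs | hs
    · refine hco ⟨X, Xᶜ, hXne, hne, disjoint_compl_right, Set.union_compl_self X, ?_⟩
      intro b hb t ht
      exact (hcmp b hb t ht).resolve_right (hs b hb t ht)
    · refine hco ⟨Xᶜ, X, hne, hXne, disjoint_compl_left, Set.compl_union_self X, ?_⟩
      intro b hb t ht
      exact (hcmp t ht b hb).resolve_left (hs t ht b hb)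
  · obtain ⟨y₀, hy₀, hy0, hyu⟩ := hex
    -- `F x` is either always `{x}` or always `{x}ᶜ`
    obtain ⟨F, hFcase, hF₀⟩ : ∃ F : X → Set X,
        ((∀ x, F x = {x}) ∨ (∀ x, F x = {x}ᶜ)) ∧ ∃ x, mlNbr X y₀ = F x := by
      have h1 : (mlNbr X y₀).ncard = 1 ∨ (mlNbr X y₀)ᶜ.ncard = 1 := by
        have h2 : 0 < (mlNbr X y₀).ncard := by
          rw [Set.ncard_pos (Set.toFinite _)]; exact Set.nonempty_iff_ne_empty.2 hy0
        have h3 : 0 < (mlNbr X y₀)ᶜ.ncard := by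
          rw [Set.ncard_pos (Set.toFinite _), Set.nonempty_compl]; exact hyu
        have h5 := Set.ncard_add_ncard_compl (mlNbr X y₀)
        by_contra hc
        exact hdeg y₀ hy₀ (by omega) (by omega)
      rcases h1 with h1 | h1
      · obtain ⟨x, hx⟩ := Set.ncard_eq_one.1 h1
        exact ⟨fun x => {x}, Or.inl fun _ => rfl, x, hx⟩
      · obtain ⟨x, hx⟩ := Set.ncard_eq_one.1 h1
        exact ⟨fun x => {x}ᶜ, Or.inr fun _ => rfl, x, by
          change mlNbr X y₀ = {x}ᶜ
          rw [← hx, compl_compl]⟩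
    have hFinj : Function.Injective F := by
      intro a b h
      rcases hFcase with hF | hF
      · rw [hF, hF] at h; exact Set.singleton_injective h
      · rw [hF, hF] at h; exact Set.singleton_injective (compl_injective h)
    have hFmap : ∀ (g : Equiv.Perm X) x, g • F x = F (g x) := by
      intro g x
      rcases hFcase with hF | hF
      · rw [hF, hF, Set.smul_set_singleton]; rfl
      · rw [hF, hF, Set.smul_set_compl, Set.smul_set_singleton]; rfl
    have hs : ∀ x : X, ∃ y : (Xᶜ : Set α), mlNbr X y = F x := by
      intro x
      obtain ⟨x₀, hx₀⟩ := hF₀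
      obtain ⟨Φ, hΦ⟩ := htr' x₀ x
      refine ⟨⟨Φ y₀, fun h => hy₀ ((hinv Φ y₀).1 h)⟩, ?_⟩
      rw [mlNbr_map X hinv, hx₀, hFmap, hΦ]
    choose s hs using hs
    have hsinj : Function.Injective s := fun a b h => hFinj (by rw [← hs a, ← hs b, h])
    have hssurj : ∀ z ∉ X, ∃ x, (s x : α) = z := by
      intro z hz
      by_contra hzs
      push Not at hzs
      -- at most one point of `Xᶜ` is missed by `s`, because `|X| ≥ w - 1` and `|Xᶜ| ≤ w`
      have hrange : ∀ y ∉ X, y = z ∨ ∃ x, (s x : α) = y := by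
        by_contra hc
        push Not at hc
        obtain ⟨y, hy, hyz, hys⟩ := hc
        have hsub : insert y (insert z (Set.range fun x => (s x : α))) ⊆ Xᶜ := by
          rintro t (rfl | rfl | ⟨x, rfl⟩)
          exacts [hy, hz, (s x).2]
        have h1 := Set.ncard_le_ncard hsub (Set.toFinite _)
        have h2 : (Set.range fun x => (s x : α)).ncard = Nat.card X := by
          rw [← Nat.card_coe_set_eq]
          exact (Nat.card_congr (Equiv.ofInjective _ (Subtype.val_injective.comp hsinj))).symm
        rw [Set.ncard_insert_of_notMem _ (Set.toFinite _),
          Set.ncard_insert_of_notMem _ (Set.toFinite _), h2] at h1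
        · omega
        · rintro ⟨x, hx⟩; exact hzs x hx
        · rintro (h | ⟨x, hx⟩)
          · exact hyz h
          · exact hys x hx
      have hzF : ∃ x₁, mlNbr X z = F x₁ := by
        obtain ⟨Φ, hΦ⟩ := hfix' z
        obtain ⟨x, hx⟩ := (hrange (Φ z) (fun h => hz ((hinv Φ z).1 h))).resolve_left hΦ
        have h1 : z = Φ⁻¹ (s x : α) := by rw [hx]; exact (Φ.symm_apply_apply z).symm
        exact ⟨_, by rw [h1, mlNbr_map X hinv, hs, hFmap]⟩
      obtain ⟨x₁, hx₁⟩ := hzF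
      obtain ⟨x₂, hx₂⟩ : ∃ x₂, x₂ ≠ x₁ := by
        have : Nontrivial X := by
          rw [← Finite.one_lt_card_iff_nontrivial]; omega
        exact exists_ne x₁
      -- both `z` and `s x₁` have neighbourhood `F x₁`, while `s x₂` is the only point with
      -- neighbourhood `F x₂`; an automorphism taking `x₁` to `x₂` cannot be injective
      obtain ⟨Ψ, hΨ⟩ := htr' x₁ x₂
      have key : ∀ t ∉ X, mlNbr X t = F x₁ → Ψ t = s x₂ := by
        intro t ht h
        have h1 : mlNbr X (Ψ t) = F x₂ := by rw [mlNbr_map X hinv, h, hFmap, hΨ]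
        rcases hrange (Ψ t) (fun h => ht ((hinv Ψ t).1 h)) with h2 | ⟨x, hx⟩
        · rw [h2, hx₁] at h1
          exact absurd (hFinj h1).symm hx₂
        · rw [← hx, hs] at h1
          rw [← hx, hFinj h1]
      have h1 := key z hz hx₁
      have h2 := key (s x₁) (s x₁).2 (hs x₁)
      exact hzs x₁ (Ψ.injective (h2.trans h1.symm))
    have hadj : ∀ x x' : X, ((x' : α) < s x ∨ (s x : α) < x') ↔ x' ∈ F x := by
      intro x x'
      rw [← hs x]; rfl
    have hcardw : Nat.card X = w := by
      by_contra hnew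
      obtain ⟨T, hT, hTw⟩ := hwidth.1
      have hmem : ∀ t : α, ∃ x : X, t = x ∨ t = s x := by
        intro t
        by_cases ht : t ∈ X
        · exact ⟨⟨t, ht⟩, Or.inl rfl⟩
        · obtain ⟨x, hx⟩ := hssurj t ht
          exact ⟨x, Or.inr hx.symm⟩
      choose π hπ using hmem
      -- if `|X| = w - 1`, an antichain of size `w` contains some `x` together with `s x`
      have hnotinj : ∃ a ∈ T, ∃ b ∈ T, a ≠ b ∧ π a = π b := by
        refine Set.exists_ne_map_eq_of_ncard_lt_of_maps_to (t := Set.univ) ?_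
          (fun _ _ => Set.mem_univ _) (Set.toFinite _)
        rw [Set.ncard_univ]; omega
      have hpair : ∃ x : X, (x : α) ∈ T ∧ (s x : α) ∈ T := by
        obtain ⟨a, ha, b, hb, hab, h⟩ := hnotinj
        refine ⟨π a, ?_⟩
        have h1 := hπ a
        have h2 := hπ b
        rw [← h] at h2
        rcases h1 with h1 | h1 <;> rcases h2 with h2 | h2
        · exact (hab (h1.trans h2.symm)).elim
        · exact ⟨h1 ▸ ha, h2 ▸ hb⟩
        · exact ⟨h2 ▸ hb, h1 ▸ ha⟩
        · exact (hab (h1.trans h2.symm)).elim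
      obtain ⟨x, hx, hsx⟩ := hpair
      have hincomp : ∀ a ∈ T, ∀ b ∈ T, ¬ (a < b ∨ b < a) := by
        rintro a ha b hb (h | h)
        · exact hT ha hb h.ne h.le
        · exact hT hb ha h.ne h.le
      have hxF : x ∉ F x := fun h => hincomp _ hx _ hsx ((hadj x x).2 h)
      rcases hFcase with hF | hF
      · exact hxF (by rw [hF]; rfl)
      · have hTsub : T ⊆ {(x : α), (s x : α)} := by
          intro t ht
          obtain ⟨x', hx'⟩ : ∃ x' : X, t = x' ∨ t = s x' := ⟨π t, hπ t⟩
          by_cases hxx : x' = x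
          · subst hxx; exact hx'
          · exfalso
            rcases hx' with rfl | rfl
            · exact hincomp _ ht _ hsx ((hadj x x').2 (by rw [hF]; exact hxx))
            · exact hincomp _ hx _ ht ((hadj x' x).2 (by rw [hF]; exact fun h => hxx h.symm))
        have := (Set.ncard_le_ncard hTsub (Set.toFinite _)).trans (ml_pair_le _ _)
        omega
    let ι : Fin w ≃ X := (Finite.equivFinOfCardEq hcardw).symm
    let P : Fin w → α := fun i => ι i
    let Q : Fin w → α := fun i => s (ι i)
    have hsurj : ∀ a, (∃ i, P i = a) ∨ ∃ i, Q i = a := by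
      intro a
      by_cases ha : a ∈ X
      · exact Or.inl ⟨ι.symm ⟨a, ha⟩, by simp [P]⟩
      · obtain ⟨x, hx⟩ := hssurj a ha
        exact Or.inr ⟨ι.symm x, by simp [Q, hx]⟩
    have hPP : ∀ i j, P i ≤ P j → i = j := fun i j h =>
      ι.injective (Subtype.ext (hX.eq (ι i).2 (ι j).2 h))
    have hQQ : ∀ i j, Q i ≤ Q j → i = j := fun i j h =>
      ι.injective (hsinj (Subtype.ext (hXc.eq (s (ι i)).2 (s (ι j)).2 h)))
    have hPQne : ∀ i j, P i ≠ Q j := fun i j h => (s (ι j)).2 (by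
      change Q j ∈ X
      rw [← h]; exact (ι i).2)
    have hmemF : ∀ i j, (P i < Q j ∨ Q j < P i) ↔ ι i ∈ F (ι j) := fun i j => hadj _ _
    rcases hside with hsd | hsd
    · have hQP : ∀ i j, ¬ Q i ≤ P j := fun i j h =>
        hsd (P j) (ι j).2 (Q i) (s (ι i)).2 (lt_of_le_of_ne h (hPQne j i).symm)
      have hPQ : ∀ i j, P i ≤ Q j ↔ ι i ∈ F (ι j) := by
        intro i j
        rw [← hmemF, or_iff_left (fun h => hQP _ _ h.le)]
        exact ⟨fun h => lt_of_le_of_ne h (hPQne i j), le_of_lt⟩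
      rcases hFcase with hF | hF
      · exact Or.inr (ml_iso_kc2 P Q hsurj hPP hQQ hQP (fun i j => by simp [hPQ, hF]))
      · exact Or.inl (ml_iso_sw P Q hsurj hPP hQQ hQP (fun i j => by simp [hPQ, hF]))
    · have hQP : ∀ i j, ¬ P i ≤ Q j := fun i j h =>
        hsd (P i) (ι i).2 (Q j) (s (ι j)).2 (lt_of_le_of_ne h (hPQne i j))
      have hPQ : ∀ i j, Q i ≤ P j ↔ ι j ∈ F (ι i) := by
        intro i j
        rw [← hmemF, or_iff_right (fun h => hQP _ _ h.le)]
        exact ⟨fun h => lt_of_le_of_ne h (hPQne j i).symm, le_of_lt⟩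
      have hsurj' := fun a => (hsurj a).symm
      rcases hFcase with hF | hF
      · exact Or.inr (ml_iso_kc2 Q P hsurj' hQQ hPP hQP (fun i j => by simp [hPQ, hF, eq_comm]))
      · exact Or.inl (ml_iso_sw Q P hsurj' hQQ hPP hQP (fun i j => by simp [hPQ, hF, eq_comm]))

/-! ### Rank levels and automorphisms -/

theorem ml_lowSet_inv {α : Type*} [PartialOrder α] (Φ : α ≃o α) (k : ℕ) :
    ∀ x, Φ x ∈ lowSet α k ↔ x ∈ lowSet α k := by
  induction k with
  | zero => intro x; rfl
  | succ k ih =>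
    intro x
    have h : (∀ y, y < Φ x → y ∈ lowSet α k) ↔ ∀ y, y < x → y ∈ lowSet α k := by
      rw [Φ.surjective.forall]
      simp [ih]
    simp only [lowSet, Set.mem_union, Set.mem_ofPred_eq, ih, h]

theorem ml_rankSet_inv {α : Type*} [PartialOrder α] (k : ℕ) (Φ : α ≃o α) (x : α) :
    Φ x ∈ rankSet α k ↔ x ∈ rankSet α k := by
  have h : (∀ y, y < Φ x → y ∈ lowSet α k) ↔ ∀ y, y < x → y ∈ lowSet α k := by
    rw [Φ.surjective.forall]
    simp [ml_lowSet_inv]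
  simp only [rankSet, Set.mem_ofPred_eq, ml_lowSet_inv, h]

theorem ml_rankSet_antichain {α : Type*} [PartialOrder α] (k : ℕ) :
    IsAntichain (· ≤ ·) (rankSet α k) := fun _ hx _ hy hne hle =>
  hx.1 (hy.2 _ (lt_of_le_of_ne hle hne))

/-- `α(R_k)` is the order of the group of restrictions of automorphisms to `R_k`. -/
theorem ml_alpha_eq {α : Type*} [PartialOrder α] (k : ℕ) :
    alphaRank α k = Nat.card (mlRes (rankSet α k) (ml_rankSet_inv k)).range := by
  let f : Equiv.Perm (rankSet α k) → (rankSet α k → α) := fun σ x => (σ x : α)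
  have hf : Function.Injective f := fun σ τ h =>
    Equiv.ext fun x => Subtype.ext (congrFun h x)
  have : {g : ↥(rankSet α k) → α | ∃ Φ : α ≃o α, ∀ x : ↥(rankSet α k), g x = Φ x.1} =
      f '' ((mlRes (rankSet α k) (ml_rankSet_inv k)).range : Set _) := by
    ext g
    constructor
    · rintro ⟨Φ, hΦ⟩
      exact ⟨_, ⟨Φ, rfl⟩, funext fun x => (hΦ x).symm⟩
    · rintro ⟨_, ⟨Φ, rfl⟩, rfl⟩
      exact ⟨Φ, fun x => rfl⟩
  rw [alphaRank, this, Set.ncard_image_of_injective _ hf]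
  rfl

theorem stmt7 {α : Type*} [Fintype α] [PartialOrder α] (w : ℕ) (hw : 3 ≤ w)
    (hml : MaxLockedBase α) (hwidth : HasWidthP α w)
    (hh1 : (rankSet α 1).Nonempty) (hh2 : ∀ k, 2 ≤ k → rankSet α k = ∅) :
    IsoSW α w ∨ IsoKC2 α w := by
  obtain ⟨hco, hfix, hml⟩ := hml
  have hwu : ∀ v, HasWidthP α v → v = w := by
    intro v hv
    obtain ⟨⟨S, hS, hSv⟩, hv2⟩ := hv
    obtain ⟨⟨T, hT, hTw⟩, hw2⟩ := hwidth
    have := hv2 T hT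
    have := hw2 S hS
    omega
  obtain ⟨k, hk, hk4⟩ : ∃ k, (w - 1)! ≤ alphaRank α k ∧ (w = 4 → 8 < alphaRank α k) := by
    rcases hml with ⟨v, hv, -, hv4, k, hk⟩ | ⟨hv, k, hk⟩
    · obtain rfl := hwu v hv
      exact ⟨k, hk, fun h => absurd h hv4⟩
    · obtain rfl := hwu 4 hv
      refine ⟨k, ?_, fun _ => hk⟩
      simp only [Nat.reduceSub, Nat.factorial]
      omega
  have hlow1 : lowSet α 1 = rankSet α 0 := by
    ext x; simp [lowSet, rankSet]
  have hlow2 : lowSet α 2 = Set.univ := by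
    by_contra hne
    obtain ⟨m, hm⟩ := (Set.toFinite (lowSet α 2)ᶜ).exists_minimal
      (Set.nonempty_compl.2 hne)
    have : m ∈ rankSet α 2 := by
      refine ⟨hm.1, fun y hy => ?_⟩
      by_contra hc
      exact hm.not_lt hc hy
    rw [hh2 2 le_rfl] at this
    exact this
  have hcompl : rankSet α 1 = (rankSet α 0)ᶜ := by
    have h : lowSet α 2 = lowSet α 1 ∪ rankSet α 1 := rfl
    ext x
    constructor
    · intro hx; rw [← hlow1]; exact hx.1
    · intro hx
      have : x ∈ lowSet α 2 := by rw [hlow2]; trivial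
      rw [h, hlow1] at this
      exact this.resolve_left hx
  have hmin : ∀ x ∈ rankSet α 0, ∀ y, ¬ y < x := fun x hx y hy => hx.2 y hy
  have hk2 : k < 2 := by
    by_contra hc
    have h1 : alphaRank α k ≤ 1 := by
      have : IsEmpty (rankSet α k) := by
        rw [hh2 k (by omega)]; infer_instance
      rw [ml_alpha_eq]
      have := Subgroup.card_le_card_group (mlRes (rankSet α k) (ml_rankSet_inv k)).range
      rwa [Nat.card_unique (α := Equiv.Perm (rankSet α k))] at this
    have h2 : 2 ! ≤ (w - 1)! := Nat.factorial_le (by omega)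
    rw [Nat.factorial_two] at h2
    omega
  rw [ml_alpha_eq] at hk hk4
  obtain rfl | rfl : k = 0 ∨ k = 1 := by omega
  · refine ml_structure hw (rankSet α 0) (ml_rankSet_inv 0) (ml_rankSet_antichain 0) ?_
      (Or.inl fun x hx y _ => hmin x hx y) ?_ hco hfix hwidth hk hk4
    · rw [← hcompl]; exact ml_rankSet_antichain 1
    · rw [← hcompl]; exact hh1
  · have hcompl' : (rankSet α 1)ᶜ = rankSet α 0 := by rw [hcompl, compl_compl]
    refine ml_structure hw (rankSet α 1) (ml_rankSet_inv 1) (ml_rankSet_antichain 1) ?_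
      (Or.inr fun x _ y hy => ?_) ?_ hco hfix hwidth hk hk4
    · rw [hcompl']; exact ml_rankSet_antichain 0
    · exact hmin y (by rw [← hcompl']; exact hy) x
    · rw [hcompl']
      obtain ⟨x, hx⟩ := hh1
      by_contra hemp
      rw [Set.not_nonempty_iff_eq_empty] at hemp
      rw [hcompl] at hx
      refine hx ⟨fun h => h, fun y hy => ?_⟩
      have : x ∈ rankSet α 1 := by rw [hcompl]; exact hx
      have := this.2 y hy
      rw [hlow1, hemp] at this
      exact this.elim
end
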